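/- arXiv:2605.22553 — 3 statements merged into one kernel-verified Lean document; each statement's English description precedes it below -/
import Mathlib

section
/- Let k ≥ 2 be an integer and let 0 < ε ≤ d/4 with d ∈ (0,1). Let G be a graph on n vertices and let V₁, …, V_ℓ be pairwise disjoint subsets of V(G), each of size L, covering all but at most εn vertices of G, with ℓ ≥ 2(k−1)/d. Let R be the graph on {1, …, ℓ} in which i and j are adjacent if and only if the pair (V_i, V_j) is ε-regular in G with density greater than d. Suppose that for all nonadjacent i, j ∈ V(R), d_R(i) + d_R(j) ≥ 2(1 − 1/k − d − 2ε)·ℓ. Then there exists a collection of pairwise disjoint groups, each group consisting of k of the clusters V_{i₁}, …, V_{i_k} with {i₁, …, i_k} a clique in R (so every pair of clusters in a group is ε-regular with density greater than d), such that the vertices of G not contained in any group number at most 2k²dn. -/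
/-- The pair `(A, B)` is `ε`-regular in `G`. -/
def EpsRegular {V : Type*} (G : SimpleGraph V) [DecidableRel G.Adj]
    (ε : ℝ) (A B : Finset V) : Prop :=
  ∀ X ⊆ A, ∀ Y ⊆ B, ε * A.card < X.card → ε * B.card < Y.card →
    |(G.edgeDensity X Y : ℝ) - (G.edgeDensity A B : ℝ)| < ε

/-- Adjacency in the reduced graph: `i ≠ j` and the pair `(V_i, V_j)` is `ε`-regular
with density greater than `d`. -/
def RedAdj {V : Type*} (G : SimpleGraph V) [DecidableRel G.Adj] (ε d : ℝ)
    {ℓ : ℕ} (P : Fin ℓ → Finset V) (i j : Fin ℓ) : Prop :=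
  i ≠ j ∧ EpsRegular G ε (P i) (P j) ∧ d < (G.edgeDensity (P i) (P j) : ℝ)

/-- Degree of `i` in the reduced graph. -/
noncomputable def redDeg {V : Type*} (G : SimpleGraph V) [DecidableRel G.Adj] (ε d : ℝ)
    {ℓ : ℕ} (P : Fin ℓ → Finset V) (i : Fin ℓ) : ℕ :=
  {j : Fin ℓ | RedAdj G ε d P i j}.ncard

namespace OreHS

section
open scoped Classical

inductive Reach {κ : Type*} (m : κ → κ → Prop) (snk : κ → Prop) (T : Finset κ) : κ → Prop
  | base (i : κ) : i ∈ T → snk i → Reach m snk T i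
  | step (i j : κ) : i ∈ T → m i j → Reach m snk T j → Reach m snk T i

variable {V κ : Type*}

theorem Reach.mem {m : κ → κ → Prop} {snk : κ → Prop} {T : Finset κ} {i : κ}
    (h : Reach m snk T i) : i ∈ T := by
  cases h <;> assumption

theorem Reach.mono {m : κ → κ → Prop} {snk : κ → Prop} {T T' : Finset κ} (hT : T ⊆ T') {i : κ}
    (h : Reach m snk T i) : Reach m snk T' i := by
  induction h with
  | base i hi hs => exact .base i (hT hi) hs
  | step i j hi hm _ ih => exact .step i j (hT hi) hm ih

theorem Reach.split {m : κ → κ → Prop} {snk : κ → Prop} {T : Finset κ} (X : κ) {Z : κ}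
    (h : Reach m snk T Z) : Reach m snk (T.erase X) Z ∨
      (Reach m snk T X ∧ (snk X ∨ ∃ Y, m X Y ∧ Reach m snk (T.erase X) Y)) := by
  induction h with
  | base i hi hs =>
    by_cases h : i = X
    · subst h; exact .inr ⟨.base i hi hs, .inl hs⟩
    · exact .inl (.base i (Finset.mem_erase.2 ⟨h, hi⟩) hs)
  | step i j hi hm hr ih =>
    rcases ih with ih | ih
    · by_cases h : i = X
      · subst h; exact .inr ⟨.step i j hi hm hr, .inr ⟨j, hm, ih⟩⟩
      · exact .inl (.step i j (Finset.mem_erase.2 ⟨h, hi⟩) hm ih)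
    · exact .inr ih

theorem Reach.filter {m : κ → κ → Prop} {snk : κ → Prop} {T : Finset κ} {Z : κ}
    (h : Reach m snk T Z) : Reach m snk (T.filter (Reach m snk T)) Z := by
  induction h with
  | base i hi hs => exact .base i (Finset.mem_filter.2 ⟨hi, .base i hi hs⟩) hs
  | step i j hi hm hr ih => exact .step i j (Finset.mem_filter.2 ⟨hi, .step i j hi hm hr⟩) hm ih

theorem exists_terminal (m : κ → κ → Prop) (snk : κ → Prop) (A : Finset κ) (hne : A.Nonempty)
    (h : ∀ X ∈ A, Reach m snk A X) :
    ∃ A' ⊆ A, A'.Nonempty ∧ (∀ W ∈ A', ∀ X ∈ A, X ≠ W → Reach m snk (A.erase W) X) ∧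
      ∀ W ∈ A', ((A.erase W).filter (m W)).card ≤ A'.card := by
  let blk : κ → Finset κ := fun U => (A.erase U).filter (fun X => ¬ Reach m snk (A.erase U) X)
  have hblk : ∀ U X, X ∈ blk U ↔ (X ≠ U ∧ X ∈ A) ∧ ¬ Reach m snk (A.erase U) X := by
    intro U X; simp [blk]
  by_cases hall : ∀ U ∈ A, blk U = ∅
  · refine ⟨A, subset_rfl, hne, ?_, ?_⟩
    · intro W hW X hX hXW
      by_contra hc
      have : X ∈ blk W := (hblk _ _).2 ⟨⟨hXW, hX⟩, hc⟩
      rw [hall W hW] at this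
      simp at this
    · intro W hW
      exact Finset.card_le_card ((Finset.filter_subset _ _).trans (Finset.erase_subset _ _))
  · push Not at hall
    obtain ⟨U0, hU0, hU0'⟩ := hall
    obtain ⟨U, hU, hmin⟩ := Finset.exists_min_image (A.filter (fun U => (blk U).Nonempty))
      (fun U => (blk U).card) ⟨U0, by rw [Finset.mem_filter]; exact ⟨hU0, hU0'⟩⟩
    rw [Finset.mem_filter] at hU
    refine ⟨blk U, (Finset.filter_subset _ _).trans (Finset.erase_subset _ _), hU.2, ?_, ?_⟩
    · intro W hW X hX hXW
      by_contra hc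
      have hXb : X ∈ blk W := (hblk _ _).2 ⟨⟨hXW, hX⟩, hc⟩
      have hW' := (hblk _ _).1 hW
      have hle := hmin W (by simp only [Finset.mem_filter]; exact ⟨hW'.1.2, ⟨X, hXb⟩⟩)
      have hss : blk W ⊂ blk U := by
        rw [Finset.ssubset_iff_of_subset]
        · exact ⟨W, hW, fun h => by simp [hblk] at h⟩
        · intro X hX
          have hX' := (hblk _ _).1 hX
          have key : ∀ Y, Reach m snk (A.erase U) Y → Reach m snk (A.erase W) Y := by
            intro Y hY
            rcases hY.split W with h1 | h1
            · exact h1.mono (Finset.erase_subset_erase _ (Finset.erase_subset _ _))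
            · exact absurd h1.1 hW'.2
          rw [hblk]
          refine ⟨⟨?_, hX'.1.2⟩, ?_⟩
          · rintro rfl
            rcases (h X hX'.1.2).split X with h1 | ⟨_, h1 | ⟨Y, hY, h1⟩⟩
            · exact absurd h1.mem (by simp)
            · exact hX'.2 (.base X (by simp [hX'.1.2, hX'.1.1]) h1)
            · exact hX'.2 (.step X Y (by simp [hX'.1.2, hX'.1.1]) hY (key Y h1))
          · intro h1
            exact hX'.2 (key X h1)
      exact absurd (Finset.card_lt_card hss) (not_lt.2 hle)
    · intro W hW
      have hW' := (hblk _ _).1 hW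
      have hsub : (A.erase W).filter (m W) ⊆ insert U ((blk U).erase W) := by
        intro X hX
        simp only [Finset.mem_filter, Finset.mem_erase] at hX
        rw [Finset.mem_insert, Finset.mem_erase, hblk]
        by_cases hXU : X = U
        · exact .inl hXU
        · refine .inr ⟨hX.1.1, ⟨hXU, hX.1.2⟩, fun h1 => hW'.2 ?_⟩
          exact .step W X (by simp [hW'.1.1, hW'.1.2]) hX.2 h1
      refine (Finset.card_le_card hsub).trans ((Finset.card_insert_le _ _).trans ?_)
      rw [Finset.card_erase_of_mem hW]
      have : 0 < (blk U).card := Finset.card_pos.2 hU.2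
      omega

/-- neighbours of `x` inside `T` -/
noncomputable def nb (G : SimpleGraph V) (T : Finset V) (x : V) : Finset V :=
  T.filter (fun v => G.Adj x v)

noncomputable def dg (G : SimpleGraph V) (T : Finset V) (x : V) : ℕ := (nb G T x).card

noncomputable def cls (S : Finset V) (c : V → κ) (i : κ) : Finset V := S.filter (fun v => c v = i)

def mv (G : SimpleGraph V) (S : Finset V) (c : V → κ) (i j : κ) : Prop :=
  i ≠ j ∧ ∃ v ∈ S, c v = i ∧ ∀ u ∈ S, c u = j → ¬ G.Adj v u

def Proper (G : SimpleGraph V) (S : Finset V) (c : V → κ) : Prop :=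
  ∀ u ∈ S, ∀ v ∈ S, G.Adj u v → c u ≠ c v

def Col (G : SimpleGraph V) (S : Finset V) (C : Finset κ) (b : κ → ℕ) (c : V → κ) : Prop :=
  (∀ v ∈ S, c v ∈ C) ∧ Proper G S c ∧ ∀ i ∈ C, (cls S c i).card ≤ b i

theorem mem_nb {G : SimpleGraph V} {T : Finset V} {x v : V} :
    v ∈ nb G T x ↔ v ∈ T ∧ G.Adj x v := by simp [nb]

theorem mem_cls {S : Finset V} {c : V → κ} {i : κ} {v : V} :
    v ∈ cls S c i ↔ v ∈ S ∧ c v = i := by simp [cls]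

theorem dg_pos {G : SimpleGraph V} {T : Finset V} {x : V} :
    1 ≤ dg G T x ↔ ∃ v ∈ T, G.Adj x v := by
  unfold dg
  rw [Nat.succ_le_iff, Finset.card_pos]
  constructor
  · rintro ⟨v, hv⟩; exact ⟨v, mem_nb.1 hv⟩
  · rintro ⟨v, hv⟩; exact ⟨v, mem_nb.2 hv⟩

theorem dg_mono {G : SimpleGraph V} {T T' : Finset V} (h : T ⊆ T') (x : V) :
    dg G T x ≤ dg G T' x :=
  Finset.card_le_card (Finset.filter_subset_filter _ h)

theorem dg_insert_le {G : SimpleGraph V} {T : Finset V} (v x : V) :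
    dg G (insert v T) x ≤ dg G T x + 1 := by
  have : nb G (insert v T) x ⊆ insert v (nb G T x) := by
    intro u; simp only [mem_nb, Finset.mem_insert]; tauto
  exact (Finset.card_le_card this).trans (Finset.card_insert_le _ _)

theorem dg_erase {G : SimpleGraph V} {T : Finset V} {v x : V} (hv : v ∈ T) (h : G.Adj x v) :
    dg G (T.erase v) x + 1 = dg G T x := by
  have : nb G (T.erase v) x = (nb G T x).erase v := by
    ext u; simp only [mem_nb, Finset.mem_erase]; tauto
  unfold dg
  rw [this, Finset.card_erase_add_one (mem_nb.2 ⟨hv, h⟩)]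

theorem dg_sum {G : SimpleGraph V} {S : Finset V} {c : V → κ} {C : Finset κ}
    (h : ∀ v ∈ S, c v ∈ C) (x : V) : dg G S x = ∑ i ∈ C, dg G (cls S c i) x := by
  unfold dg
  rw [Finset.card_eq_sum_card_fiberwise (f := c) (t := C)]
  · refine Finset.sum_congr rfl fun i _ => ?_
    congr 1
    ext v; simp only [Finset.mem_filter, mem_nb, mem_cls]; tauto
  · intro v hv
    exact h v (mem_nb.1 hv).1

theorem dg_split {G : SimpleGraph V} {S : Finset V} (p : V → Prop) (x : V) :
    dg G S x = dg G (S.filter p) x + dg G (S.filter (fun v => ¬ p v)) x := by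
  unfold dg
  rw [← Finset.card_filter_add_card_filter_not (s := nb G S x) p]
  congr 2 <;> (ext v; simp only [Finset.mem_filter, mem_nb]; tauto)

theorem shift (G : SimpleGraph V) (S : Finset V) (c : V → κ) (k : ℕ) (hc : Proper G S c) :
    ∀ (N : ℕ) (T : Finset κ) (X : κ), T.card = N →
    Reach (mv G S c) (fun i => (cls S c i).card < k) T X →
    ∃ c' : V → κ, Proper G S c' ∧ (∀ v, c v ∉ T → c' v = c v) ∧ (∀ v, c v ∈ T → c' v ∈ T) ∧
      (∀ v, c' v = X → c v = X) ∧
      (∀ i, i ≠ X → (cls S c' i).card ≤ max (cls S c i).card k) ∧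
      (cls S c' X).card + 1 ≤ max (cls S c X).card k := by
  intro N
  induction N with
  | zero =>
    intro T X hT hr
    rw [Finset.card_eq_zero] at hT
    have := hr.mem
    simp [hT] at this
  | succ N ih =>
    intro T X hT hr
    have hXT := hr.mem
    rcases hr.split X with h1 | ⟨_, h1 | ⟨Y, hY, h1⟩⟩
    · exact absurd h1.mem (by simp)
    · exact ⟨c, hc, fun _ _ => rfl, fun _ h => h, fun _ h => h, fun i _ => le_max_left _ _,
        le_max_of_le_right h1⟩
    · obtain ⟨c1, p1, f1, g1, s1, b1, d1⟩ := ih (T.erase X) Y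
        (by rw [Finset.card_erase_of_mem hXT, hT]; rfl) h1
      obtain ⟨hXY, v, hvS, hvX, hvn⟩ := hY
      have hYT : Y ∈ T := Finset.mem_of_mem_erase h1.mem
      have hx1 : ∀ u, c1 u = X → c u = X := by
        intro u hu
        by_cases h : c u ∈ T.erase X
        · have := g1 u h
          rw [hu] at this; simp at this
        · rw [← f1 u h, hu]
      have hv1 : c1 v = X := by rw [f1 v (by simp [hvX]), hvX]
      refine ⟨Function.update c1 v Y, ?_, ?_, ?_, ?_, ?_, ?_⟩
      · intro u hu w hw huw
        by_cases h : u = v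
        · subst h
          have hwu : w ≠ u := huw.ne'
          rw [Function.update_self, Function.update_of_ne hwu]
          intro he
          exact hvn w hw (s1 w he.symm) huw
        · rw [Function.update_of_ne h]
          by_cases h2 : w = v
          · subst h2
            rw [Function.update_self]
            intro he
            exact hvn u hu (s1 u he) huw.symm
          · rw [Function.update_of_ne h2]
            exact p1 u hu w hw huw
      · intro u hu
        have : u ≠ v := by rintro rfl; rw [hvX] at hu; exact hu hXT
        rw [Function.update_of_ne this]
        exact f1 u (fun h => hu (Finset.mem_of_mem_erase h))
      · intro u hu
        by_cases h : u = v
        · subst h; rwa [Function.update_self]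
        · rw [Function.update_of_ne h]
          by_cases h2 : c u = X
          · rw [f1 u (by simp [h2])]; exact hu
          · exact Finset.mem_of_mem_erase (g1 u (Finset.mem_erase.2 ⟨h2, hu⟩))
      · intro u hu
        by_cases h : u = v
        · subst h; exact hvX
        · rw [Function.update_of_ne h] at hu
          exact hx1 u hu
      · intro i hi
        by_cases hiY : i = Y
        · subst hiY
          refine le_trans ?_ d1
          have : cls S (Function.update c1 v i) i ⊆ insert v (cls S c1 i) := by
            intro u
            simp only [mem_cls, Finset.mem_insert]
            by_cases h : u = v
            · simp [h]
            · rw [Function.update_of_ne h]; tauto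
          exact (Finset.card_le_card this).trans (Finset.card_insert_le _ _)
        · refine le_trans (Finset.card_le_card ?_) (b1 i hiY)
          intro u
          simp only [mem_cls]
          by_cases h : u = v
          · subst h; rw [Function.update_self]; intro h; exact absurd h.2.symm hiY
          · rw [Function.update_of_ne h]; tauto
      · refine le_trans ?_ (le_max_left _ _)
        have : cls S (Function.update c1 v Y) X ⊆ (cls S c X).erase v := by
          intro u
          simp only [mem_cls, Finset.mem_erase]
          by_cases h : u = v
          · subst h; rw [Function.update_self]; intro h; exact absurd h.2.symm hXY
          · rw [Function.update_of_ne h]; intro h2; exact ⟨h, h2.1, hx1 u h2.2⟩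
        have h2 := Finset.card_le_card this
        have h3 : v ∈ cls S c X := mem_cls.2 ⟨hvS, hvX⟩
        have h4 := Finset.card_erase_add_one h3
        omega

theorem glue {G : SimpleGraph V} {A B : Finset V} {CA CB : Finset κ} {b : κ → ℕ} {c1 c2 : V → κ}
    (hC : Disjoint CA CB) (h1 : Col G A CA b c1) (h2 : Col G B CB b c2) (hAB : Disjoint A B) :
    Col G (A ∪ B) (CA ∪ CB) b (fun v => if v ∈ A then c1 v else c2 v) := by
  have hB : ∀ v ∈ B, v ∉ A := fun v hv hA => (Finset.disjoint_left.1 hAB) hA hv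
  refine ⟨?_, ?_, ?_⟩
  · intro v hv
    by_cases h : v ∈ A
    · simp [h, h1.1 v h]
    · have : v ∈ B := by simpa [h] using hv
      simp [h, h2.1 v this]
  · intro u hu v hv huv
    have hd : ∀ u ∈ A, ∀ v ∈ B, c1 u ≠ c2 v := fun u hu v hv he =>
      Finset.disjoint_left.1 hC (h1.1 u hu) (he ▸ h2.1 v hv)
    by_cases h : u ∈ A <;> by_cases h' : v ∈ A
    · simp only [h, h', if_true]; exact h1.2.1 u h v h' huv
    · have : v ∈ B := by simpa [h'] using hv
      simp only [h, h', if_true, if_false]; exact hd u h v this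
    · have : u ∈ B := by simpa [h] using hu
      simp only [h, h', if_true, if_false]; exact (hd v h' u this).symm
    · have hu' : u ∈ B := by simpa [h] using hu
      have hv' : v ∈ B := by simpa [h'] using hv
      simp only [h, h', if_false]; exact h2.2.1 u hu' v hv' huv
  · intro i hi
    rcases Finset.mem_union.1 hi with hi | hi
    · refine le_trans (Finset.card_le_card ?_) (h1.2.2 i hi)
      intro v
      simp only [mem_cls, Finset.mem_union]
      rintro ⟨hv, he⟩
      by_cases h : v ∈ A
      · simp only [h, if_true] at he; exact ⟨h, he⟩
      · have hv' : v ∈ B := by simpa [h] using hv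
        simp only [h, if_false] at he
        exact absurd (h2.1 v hv') (he ▸ Finset.disjoint_left.1 hC hi)
    · refine le_trans (Finset.card_le_card ?_) (h2.2.2 i hi)
      intro v
      simp only [mem_cls, Finset.mem_union]
      rintro ⟨hv, he⟩
      by_cases h : v ∈ A
      · simp only [h, if_true] at he
        exact absurd hi (he ▸ Finset.disjoint_left.1 hC (h1.1 v h))
      · have hv' : v ∈ B := by simpa [h] using hv
        simp only [h, if_false] at he
        exact ⟨hv', he⟩

/-- insert a vertex into a class containing none of its neighbours -/
theorem insert_at {G : SimpleGraph V} {T : Finset V} {D : Finset κ} {b : κ → ℕ} {c : V → κ}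
    (h : Col G T D b c) {v : V} (hv : v ∉ T) {p : κ} (hp : p ∈ D)
    (h0 : dg G (cls T c p) v = 0) :
    Col G (insert v T) D (fun i => if i = p then b i + 1 else b i) (Function.update c v p) := by
  have hn : ∀ u ∈ T, c u = p → ¬ G.Adj v u := by
    intro u hu hc ha
    have : 1 ≤ dg G (cls T c p) v := dg_pos.2 ⟨u, mem_cls.2 ⟨hu, hc⟩, ha⟩
    omega
  have hne : ∀ u ∈ T, u ≠ v := by rintro u hu rfl; exact hv hu
  refine ⟨?_, ?_, ?_⟩
  · intro u hu
    rcases Finset.mem_insert.1 hu with rfl | hu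
    · simpa using hp
    · rw [Function.update_of_ne (hne u hu)]; exact h.1 u hu
  · intro u hu w hw ha
    rcases Finset.mem_insert.1 hu with hu' | hu' <;>
      rcases Finset.mem_insert.1 hw with hw' | hw'
    · exact absurd (hu'.trans hw'.symm) ha.ne
    · rw [hu', Function.update_self, Function.update_of_ne (hne w hw')]
      exact fun he => hn w hw' he.symm (hu' ▸ ha)
    · rw [hw', Function.update_self, Function.update_of_ne (hne u hu')]
      exact fun he => hn u hu' he (hw' ▸ ha.symm)
    · rw [Function.update_of_ne (hne u hu'), Function.update_of_ne (hne w hw')]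
      exact h.2.1 u hu' w hw' ha
  · intro i hi
    have hb := h.2.2 i hi
    simp only at hb ⊢
    split_ifs with hip
    · have : cls (insert v T) (Function.update c v p) i ⊆ insert v (cls T c i) := by
        intro u
        simp only [mem_cls, Finset.mem_insert]
        rintro ⟨hu | hu, he⟩
        · exact .inl hu
        · rw [Function.update_of_ne (hne u hu)] at he; exact .inr ⟨hu, he⟩
      have h1 := Finset.card_le_card this
      have h2 := Finset.card_insert_le v (cls T c i)
      omega
    · refine le_trans (Finset.card_le_card ?_) hb
      intro u
      simp only [mem_cls, Finset.mem_insert]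
      rintro ⟨rfl | hu, he⟩
      · rw [Function.update_self] at he; exact absurd he.symm hip
      · rw [Function.update_of_ne (hne u hu)] at he; exact ⟨hu, he⟩

theorem insert_free {G : SimpleGraph V} {T : Finset V} {D : Finset κ} {k : ℕ} {c : V → κ}
    (h : Col G T D (fun _ => k) c) {v : V} (hv : v ∉ T) (hd : dg G T v < D.card) :
    ∃ p ∈ D, ∃ c', Col G (insert v T) D (fun i => if i = p then k + 1 else k) c' := by
  by_contra hcon
  have : ∀ i ∈ D, 1 ≤ dg G (cls T c i) v := by
    intro i hi
    by_contra h0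
    exact hcon ⟨i, hi, _, insert_at h hv hi (by omega)⟩
  have h2 := Finset.card_nsmul_le_sum D _ 1 this
  rw [← dg_sum h.1] at h2
  simp at h2
  omega

theorem y_ineq (q t i e δ τ s : ℝ) (hq : 0 < q) (hi : 0 ≤ i) (hie : i ≤ e) (hδ : 0 ≤ δ)
    (hτ : τ = t - 1 - (δ + e)) (hs : s = max τ 0) (hit : i ≤ t)
    (hsolo : 0 < t - i → δ + 1 ≤ 2 * q) :
    t / q ≤ (t - i) * (1 / (2 * q) * (2 + e / (δ + 1))) + i * (2 / (2 * q + s)) := by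
  have hd1 : 0 < δ + 1 := by linarith
  have he : 0 ≤ e := by linarith
  rcases le_or_gt τ 0 with h | h
  · rw [max_eq_right h] at hs
    subst hs
    have h1 : 0 ≤ (t - i) * (1 / (2 * q) * (e / (δ + 1))) := by
      have : 0 ≤ t - i := by linarith
      positivity
    have h2 : (t - i) * (1 / (2 * q) * (2 + e / (δ + 1))) + i * (2 / (2 * q + 0))
      = t / q + (t - i) * (1 / (2 * q) * (e / (δ + 1))) := by
      field_simp; ring
    linarith
  · rw [max_eq_left h.le] at hs
    subst hs
    have hti : s + 1 + δ ≤ t - i := by linarith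
    have hδq := hsolo (by linarith)
    -- e (t-i)/(δ+1) ≥ i (1 + s/(2q))
    have h1 : i * (1 + s / (2 * q)) ≤ (t - i) * (e / (δ + 1)) := by
      have a1 : 1 + s / (2 * q) ≤ (t - i) / (δ + 1) := by
        have : s / (2 * q) ≤ s / (δ + 1) := by gcongr
        have h3 : (s + 1 + δ) / (δ + 1) ≤ (t - i) / (δ + 1) := by gcongr
        have h4 : (s + 1 + δ) / (δ + 1) = 1 + s / (δ + 1) := by field_simp; ring
        linarith
      calc i * (1 + s / (2 * q)) ≤ e * ((t - i) / (δ + 1)) := by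
            apply mul_le_mul hie a1 _ he
            positivity
        _ = _ := by ring
    have h2 : 1 ≤ s / (2 * q) + 4 * q / (2 * q + s) := by
      rw [div_add_div _ _ (by positivity) (by positivity), le_div_iff₀ (by positivity)]
      nlinarith [sq_nonneg s, mul_pos hq h, mul_pos hq hq]
    have h3 : (t - i) * (1 / (2 * q) * (2 + e / (δ + 1))) + i * (2 / (2 * q + s)) - t / q
      = (1 / (2 * q)) * ((t - i) * (e / (δ + 1)) + i * (4 * q / (2 * q + s)) - 2 * i) := by
      field_simp; ring
    have h4 : 0 ≤ (t - i) * (e / (δ + 1)) + i * (4 * q / (2 * q + s)) - 2 * i := by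
      nlinarith [mul_le_mul_of_nonneg_left h2 hi]
    have h5 : 0 ≤ (1 / (2 * q)) * ((t - i) * (e / (δ + 1)) + i * (4 * q / (2 * q + s)) - 2 * i) := by
      positivity
    linarith

theorem counting (G : SimpleGraph V) (B : Finset V) (A' : Finset κ) (F : κ → Finset V)
    (q k : ℕ) (e : V → ℕ) (hq : 0 < q) (hA' : A'.Nonempty) (hF : ∀ i ∈ A', (F i).card ≤ k)
    (hB : k * q < B.card)
    (h1 : ∀ y ∈ B, ∀ i ∈ A', 1 ≤ dg G (F i) y)
    (he : ∀ y ∈ B, ∑ i ∈ A', (dg G (F i) y - 1) ≤ e y)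
    (hO : ∀ i ∈ A', ∀ x ∈ F i, ∀ y ∈ B, G.Adj x y →
      dg G B x + e y + dg G B y + 1 ≤ 2 * q + A'.card)
    (hS : ∀ i ∈ A', ∀ x ∈ F i, ∀ y ∈ B, G.Adj x y → dg G (F i) y = 1 →
      ∀ y' ∈ B, G.Adj x y' → dg G B x + e y' + dg G B y' + 1 ≤ 2 * q)
    (hQ : ∀ i ∈ A', ∀ x ∈ F i, ∀ y ∈ B, ∀ y' ∈ B, G.Adj x y → G.Adj x y' →
      dg G (F i) y = 1 → dg G (F i) y' = 1 → y ≠ y' → G.Adj y y') : False := by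
  let solo : κ → V → Prop := fun i x => ∃ y ∈ B, G.Adj x y ∧ dg G (F i) y = 1
  let g : κ → V → V → ℝ := fun i x y => if solo i x then
      1 / (2 * q) + (if dg G (F i) y = 1 then (1 - (dg G B x : ℝ) / (2 * q)) / (dg G B y + 1) else 0)
    else 1 / max (dg G B x : ℝ) (2 * q)
  have hq' : (0 : ℝ) < q := by exact_mod_cast hq
  have give : ∀ i ∈ A', ∀ x ∈ F i, ∑ y ∈ nb G B x, g i x y ≤ 1 := by
    intro i hi x hx
    by_cases hs : solo i x
    · simp only [g, hs, if_true]
      rw [Finset.sum_add_distrib, Finset.sum_const, ← Finset.sum_filter]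
      obtain ⟨y0, hy0, ha0, hd0⟩ := hs
      have hn : (dg G B x : ℝ) ≤ 2 * q := by
        have := hS i hi x hx y0 hy0 ha0 hd0 y0 hy0 ha0
        have h' : dg G B x ≤ 2 * q := by omega
        exact_mod_cast h'
      set Q := (nb G B x).filter (fun y => dg G (F i) y = 1) with hQdef
      have hQn : Q.Nonempty := ⟨y0, by simp [hQdef, mem_nb, hy0, ha0, hd0]⟩
      have hQp : (0 : ℝ) < Q.card := by exact_mod_cast Finset.card_pos.2 hQn
      have hdeg : ∀ y ∈ Q, (Q.card : ℝ) ≤ dg G B y + 1 := by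
        intro y hy
        have hsub : Q.erase y ⊆ nb G B y := by
          intro y' hy'
          simp only [hQdef, Finset.mem_erase, Finset.mem_filter, mem_nb] at hy hy' ⊢
          exact ⟨hy'.2.1.1, hQ i hi x hx y hy.1.1 y' hy'.2.1.1 hy.1.2 hy'.2.1.2 hy.2 hy'.2.2
            (Ne.symm hy'.1)⟩
        have h2 := Finset.card_le_card hsub
        have h3 := Finset.card_erase_add_one hy
        have : Q.card ≤ dg G B y + 1 := by unfold dg; omega
        exact_mod_cast this
      have hnn : 0 ≤ 1 - (dg G B x : ℝ) / (2 * q) := by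
        rw [sub_nonneg, div_le_one (by positivity)]; exact hn
      have hsum : ∑ y ∈ Q, (1 - (dg G B x : ℝ) / (2 * q)) / ((dg G B y : ℝ) + 1) ≤
          1 - (dg G B x : ℝ) / (2 * q) := by
        calc _ ≤ ∑ y ∈ Q, (1 - (dg G B x : ℝ) / (2 * q)) / Q.card :=
              Finset.sum_le_sum fun y hy => by
                have := hdeg y hy
                gcongr
          _ = _ := by rw [Finset.sum_const, nsmul_eq_mul]; field_simp
      have : (nb G B x).card • (1 / (2 * (q : ℝ))) = (dg G B x : ℝ) / (2 * q) := by
        rw [nsmul_eq_mul]; unfold dg; ring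
      linarith
    · simp only [g, hs, if_false]
      rw [Finset.sum_const, nsmul_eq_mul, mul_one_div]
      apply div_le_one_of_le₀
      · exact le_max_left _ _
      · positivity
  have receive : ∀ y ∈ B, (A'.card : ℝ) / q ≤ ∑ i ∈ A', ∑ x ∈ nb G (F i) y, g i x y := by
    intro y hy
    set t : ℝ := (A'.card : ℝ) with ht
    set δ : ℝ := (dg G B y : ℝ) with hδ
    set ey : ℝ := (e y : ℝ) with hey
    set s : ℝ := max (t - 1 - (δ + ey)) 0 with hs
    set N := A'.filter (fun i => ¬ dg G (F i) y = 1) with hN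
    have hNe : N.card ≤ e y := by
      refine le_trans ?_ (he y hy)
      calc N.card = ∑ i ∈ N, 1 := by simp
        _ ≤ ∑ i ∈ N, (dg G (F i) y - 1) := Finset.sum_le_sum fun i hi => by
            simp only [hN, Finset.mem_filter] at hi
            have := h1 y hy i hi.1
            omega
        _ ≤ _ := Finset.sum_le_sum_of_subset (Finset.filter_subset _ _)
    have hcard := Finset.card_filter_add_card_filter_not (s := A') (fun i => dg G (F i) y = 1)
    have hcard' : ((A'.filter (fun i => dg G (F i) y = 1)).card : ℝ) = t - N.card := by
      rw [ht, ← hcard]; push_cast; ring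
    have hNt : (N.card : ℝ) ≤ t := by
      rw [ht]; exact_mod_cast Finset.card_le_card (Finset.filter_subset _ _)
    have key := y_ineq q t N.card ey δ (t - 1 - (δ + ey)) s hq' (by positivity)
      (by rw [hey]; exact_mod_cast hNe) (by positivity) rfl hs hNt (by
        intro hpos
        rw [← hcard'] at hpos
        have : 0 < (A'.filter (fun i => dg G (F i) y = 1)).card := by exact_mod_cast hpos
        obtain ⟨i, hi⟩ := Finset.card_pos.1 this
        rw [Finset.mem_filter] at hi
        obtain ⟨x, hx, hxy⟩ := dg_pos.1 (h1 y hy i hi.1)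
        have := hS i hi.1 x hx y hy hxy.symm hi.2 y hy hxy.symm
        have h' : dg G B y + 1 ≤ 2 * q := by omega
        rw [hδ]; exact_mod_cast h')
    refine key.trans ?_
    rw [← Finset.sum_filter_add_sum_filter_not A' (fun i => dg G (F i) y = 1)]
    refine add_le_add ?_ ?_
    · rw [← hcard', ← nsmul_eq_mul]
      apply Finset.card_nsmul_le_sum
      intro i hi
      rw [Finset.mem_filter] at hi
      obtain ⟨x, hx⟩ := Finset.card_eq_one.1 hi.2
      rw [hx, Finset.sum_singleton]
      have hxm : x ∈ nb G (F i) y := by rw [hx]; simp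
      rw [mem_nb] at hxm
      have hso : solo i x := ⟨y, hy, hxm.2.symm, hi.2⟩
      simp only [g, hso, hi.2, if_true]
      have h3 := hS i hi.1 x hxm.1 y hy hxm.2.symm hi.2 y hy hxm.2.symm
      have h3' : (dg G B x : ℝ) + ey + δ + 1 ≤ 2 * q := by rw [hey, hδ]; exact_mod_cast h3
      have hδ0 : 0 ≤ δ := by positivity
      have h4 : 1 / (2 * (q : ℝ)) * (2 + ey / (δ + 1)) =
          1 / (2 * q) + ((ey + δ + 1) / (2 * q)) / (δ + 1) := by
        field_simp; ring
      rw [h4]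
      have h5 : (ey + δ + 1) / (2 * q) ≤ 1 - (dg G B x : ℝ) / (2 * q) := by
        rw [le_sub_iff_add_le, ← add_div, div_le_one (by positivity)]; linarith
      gcongr
    · rw [← nsmul_eq_mul]
      apply Finset.card_nsmul_le_sum
      intro i hi
      rw [Finset.mem_filter] at hi
      have hs0 : 0 ≤ s := le_max_right _ _
      have hge : ∀ x ∈ nb G (F i) y, 1 / (2 * (q : ℝ) + s) ≤ g i x y := by
        intro x hx
        rw [mem_nb] at hx
        by_cases hso : solo i x
        · simp only [g, hso, hi.2, if_true, if_false, add_zero]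
          gcongr
          linarith
        · simp only [g, hso, if_false]
          have h3 := hO i hi.1 x hx.1 y hy hx.2.symm
          have h3' : (dg G B x : ℝ) + ey + δ + 1 ≤ 2 * q + t := by
            rw [hey, hδ, ht]; exact_mod_cast h3
          have h6 : t - 1 - (δ + ey) ≤ s := le_max_left _ _
          apply one_div_le_one_div_of_le
          · exact lt_max_of_lt_right (by positivity)
          · exact max_le (by linarith) (by linarith)
      have h7 := Finset.card_nsmul_le_sum _ _ _ hge
      refine le_trans ?_ h7
      have h8 : 2 ≤ (nb G (F i) y).card := by
        have := h1 y hy i hi.1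
        have h9 := hi.2
        unfold dg at this h9
        omega
      have h8' : (2 : ℝ) ≤ (nb G (F i) y).card := by exact_mod_cast h8
      rw [nsmul_eq_mul, mul_one_div]
      gcongr
  have swap : ∑ y ∈ B, ∑ i ∈ A', ∑ x ∈ nb G (F i) y, g i x y =
      ∑ i ∈ A', ∑ x ∈ F i, ∑ y ∈ nb G B x, g i x y := by
    rw [Finset.sum_comm]
    refine Finset.sum_congr rfl fun i _ => ?_
    simp only [nb, Finset.sum_filter]
    rw [Finset.sum_comm]
    refine Finset.sum_congr rfl fun x _ => Finset.sum_congr rfl fun y _ => ?_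
    simp only [G.adj_comm]
  have lo : (B.card : ℝ) * (A'.card / q) ≤ ∑ y ∈ B, ∑ i ∈ A', ∑ x ∈ nb G (F i) y, g i x y := by
    rw [← nsmul_eq_mul]; exact Finset.card_nsmul_le_sum _ _ _ receive
  have hi : ∑ i ∈ A', ∑ x ∈ F i, ∑ y ∈ nb G B x, g i x y ≤ A'.card * k := by
    rw [← nsmul_eq_mul]
    apply Finset.sum_le_card_nsmul
    intro i hi
    calc _ ≤ ∑ x ∈ F i, (1 : ℝ) := Finset.sum_le_sum (give i hi)
      _ = (F i).card := by simp
      _ ≤ k := by exact_mod_cast hF i hi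
  have ht : (0 : ℝ) < A'.card := by exact_mod_cast Finset.card_pos.2 hA'
  have hB' : (k : ℝ) * q < B.card := by exact_mod_cast hB
  rw [swap] at lo
  have h9 : (B.card : ℝ) * (A'.card / q) ≤ A'.card * k := lo.trans hi
  rw [mul_div_assoc', div_le_iff₀ hq'] at h9
  nlinarith

theorem place {G : SimpleGraph V} {T : Finset V} {D : Finset κ} {k : ℕ} {c : V → κ}
    (h : Col G T D (fun _ => k) c) {z : V} (hz : z ∉ T) (hn : dg G T z < 2 * D.card)
    (hy : D.card ≤ dg G T z → ∀ y ∈ T, G.Adj z y → dg G T y + 1 < D.card) :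
    ∃ p ∈ D, ∃ c', Col G (insert z T) D (fun i => if i = p then k + 1 else k) c' := by
  by_cases hd : dg G T z < D.card
  · exact insert_free h hz hd
  have hd := not_lt.1 hd
  have : ∃ i ∈ D, dg G (cls T c i) z ≤ 1 := by
    by_contra hcon
    push Not at hcon
    have h2 := Finset.card_nsmul_le_sum D _ 2 hcon
    rw [← dg_sum h.1] at h2
    simp at h2
    omega
  obtain ⟨i, hi, hi1⟩ := this
  by_cases h0 : dg G (cls T c i) z = 0
  · exact ⟨i, hi, _, insert_at h hz hi h0⟩
  have h1 : dg G (cls T c i) z = 1 := by omega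
  obtain ⟨y, hyy⟩ := Finset.card_eq_one.1 h1
  have hym : y ∈ nb G (cls T c i) z := by rw [hyy]; simp
  rw [mem_nb, mem_cls] at hym
  obtain ⟨⟨hyT, hyc⟩, hza⟩ := hym
  have hkpos : 1 ≤ (cls T c i).card := Finset.card_pos.2 ⟨y, mem_cls.2 ⟨hyT, hyc⟩⟩
  have hk1 := h.2.2 i hi
  simp only at hk1
  have hC1 : Col G (T.erase y) D (fun j => if j = i then k - 1 else k) c := by
    refine ⟨fun v hv => h.1 v (Finset.mem_of_mem_erase hv), fun u hu v hv =>
      h.2.1 u (Finset.mem_of_mem_erase hu) v (Finset.mem_of_mem_erase hv), ?_⟩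
    intro j hj
    have hj' := h.2.2 j hj
    simp only at hj' ⊢
    split_ifs with hji
    · subst hji
      have hsub : cls (T.erase y) c j ⊆ (cls T c j).erase y := by
        intro u; simp only [mem_cls, Finset.mem_erase]; tauto
      have h3 := Finset.card_le_card hsub
      have h4 := Finset.card_erase_add_one (mem_cls.2 ⟨hyT, hyc⟩)
      omega
    · refine le_trans (Finset.card_le_card ?_) hj'
      intro u; simp only [mem_cls, Finset.mem_erase]; tauto
  have hC2 := insert_at hC1 (v := z) (p := i) (fun h => hz (Finset.mem_of_mem_erase h)) hi (by
    by_contra hne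
    obtain ⟨u, hu, hua⟩ := dg_pos.1 (Nat.one_le_iff_ne_zero.2 hne)
    rw [mem_cls, Finset.mem_erase] at hu
    have : u ∈ nb G (cls T c i) z := mem_nb.2 ⟨mem_cls.2 ⟨hu.1.2, hu.2⟩, hua⟩
    rw [hyy, Finset.mem_singleton] at this
    exact hu.1.1 this)
  have hC3 : Col G (insert z (T.erase y)) D (fun _ => k) (Function.update c z i) := by
    refine ⟨hC2.1, hC2.2.1, fun j hj => (hC2.2.2 j hj).trans ?_⟩
    simp only
    split_ifs <;> omega
  have hyz : y ≠ z := by rintro rfl; exact hz hyT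
  obtain ⟨p, hp, c', hc'⟩ := insert_free hC3 (v := y) (by simp [hyz]) (by
    have h5 := hy hd y hyT hza
    have h6 := dg_insert_le (G := G) (T := T.erase y) z y
    have h7 := dg_mono (G := G) (Finset.erase_subset y T) y
    omega)
  refine ⟨p, hp, c', ?_⟩
  rwa [Finset.insert_comm, Finset.insert_erase hyT] at hc'

theorem mv_iff {G : SimpleGraph V} {S : Finset V} {c : V → κ} {i j : κ} :
    mv G S c i j ↔ i ≠ j ∧ ∃ v ∈ cls S c i, ∀ u ∈ cls S c j, ¬ G.Adj v u := by
  simp only [mv, mem_cls, and_imp, and_assoc]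

theorem Reach.transport {m m' : κ → κ → Prop} {snk snk' : κ → Prop} {T T' : Finset κ} {X : κ}
    (h : Reach m snk T X) (hT : T ⊆ T') (hs : ∀ i ∈ T, snk i → snk' i)
    (hm : ∀ i ∈ T, ∀ j ∈ T, m i j → m' i j) : Reach m' snk' T' X := by
  induction h with
  | base i hi h => exact .base i (hT hi) (hs i hi h)
  | step i j hi h hr ih => exact .step i j (hT hi) (hm i hi j hr.mem h) ih

noncomputable def acc (G : SimpleGraph V) (S : Finset V) (C : Finset κ) (k : ℕ) (c : V → κ) :
    Finset κ :=
  C.filter (Reach (mv G S c) (fun i => (cls S c i).card < k) C)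

set_option maxHeartbeats 4000000 in
theorem step (G : SimpleGraph V) (S : Finset V) (C : Finset κ) (k : ℕ)
    (hcard : S.card ≤ k * C.card)
    (hOre : ∀ x ∈ S, ∀ y ∈ S, G.Adj x y → dg G S x + dg G S y + 2 ≤ 2 * C.card)
    (IH : ∀ (S' : Finset V) (C' : Finset κ), S'.card < S.card → S'.card ≤ k * C'.card →
      (∀ x ∈ S', ∀ y ∈ S', G.Adj x y → dg G S' x + dg G S' y + 2 ≤ 2 * C'.card) →
      ∃ c : V → κ, Col G S' C' (fun _ => k) c) :
    ∀ (N : ℕ) (c : V → κ) (p : κ), p ∈ C →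
      Col G S C (fun i => if i = p then k + 1 else k) c → (C \ acc G S C k c).card = N →
      ∃ c' : V → κ, Col G S C (fun _ => k) c' := by
  intro N
  induction N using Nat.strong_induction_on with
  | _ N ihN =>
  intro c p hpC hc hN
  by_contra hcon
  set 𝒜 := acc G S C k c with h𝒜
  set snk : κ → Prop := fun i => (cls S c i).card < k with hsnk
  have hAC : 𝒜 ⊆ C := Finset.filter_subset _ _
  have hreach : ∀ X ∈ 𝒜, Reach (mv G S c) snk 𝒜 X := fun X hX =>
    (Finset.mem_filter.1 hX).2.filter
  have hclosed : ∀ i ∈ C, i ∉ 𝒜 → ∀ j ∈ 𝒜, ¬ mv G S c i j := by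
    intro i hi hiA j hj hm
    exact hiA (Finset.mem_filter.2 ⟨hi, .step i j hi hm (Finset.mem_filter.1 hj).2⟩)
  have hbig : ∀ i ∈ C, i ∉ 𝒜 → k ≤ (cls S c i).card := by
    intro i hi hiA
    by_contra hlt
    exact hiA (Finset.mem_filter.2 ⟨hi, .base i hi (not_le.1 hlt)⟩)
  -- `p` is not accessible
  have hpA : p ∉ 𝒜 := by
    intro hp
    obtain ⟨c', hp', hf, hg, _, hb, hd⟩ := shift G S c k hc.2.1 _ 𝒜 p rfl (hreach p hp)
    refine hcon ⟨c', ?_, hp', ?_⟩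
    · intro v hv
      by_cases h : c v ∈ 𝒜
      · exact hAC (hg v h)
      · rw [hf v h]; exact hc.1 v hv
    · intro i hi
      have h1 := hc.2.2 i hi
      by_cases hip : i = p
      · subst hip
        simp only [if_true] at h1 ⊢
        have : max (cls S c i).card k ≤ k + 1 := max_le h1 (by omega)
        omega
      · simp only [hip, if_false] at h1 ⊢
        exact (hb i hip).trans (max_le h1 le_rfl)
  have hAle : ∀ i ∈ 𝒜, (cls S c i).card ≤ k := by
    intro i hi
    have h1 := hc.2.2 i (hAC hi)
    have : i ≠ p := by rintro rfl; exact hpA hi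
    simpa [this] using h1
  have hpk : (cls S c p).card = k + 1 := by
    have h1 := hc.2.2 p hpC
    simp only [if_true] at h1
    by_contra hne
    refine hcon ⟨c, hc.1, hc.2.1, fun i hi => ?_⟩
    have h2 := hc.2.2 i hi
    simp only at h2 ⊢
    split_ifs at h2 with hip
    · subst hip; omega
    · exact h2
  set A := S.filter (fun v => c v ∈ 𝒜) with hA
  set B := S.filter (fun v => ¬ c v ∈ 𝒜) with hB
  set D := C \ 𝒜 with hD
  set a := 𝒜.card with ha
  set q := D.card with hq
  have haq : a + q = C.card := by
    rw [ha, hq, hD, add_comm]; exact Finset.card_sdiff_add_card_eq_card hAC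
  have hpD : p ∈ D := Finset.mem_sdiff.2 ⟨hpC, hpA⟩
  have hqpos : 0 < q := Finset.card_pos.2 ⟨p, hpD⟩
  have hBD : ∀ v ∈ B, c v ∈ D := by
    intro v hv
    rw [hB, Finset.mem_filter] at hv
    exact Finset.mem_sdiff.2 ⟨hc.1 v hv.1, hv.2⟩
  have hBS : B ⊆ S := Finset.filter_subset _ _
  have hAS : A ⊆ S := Finset.filter_subset _ _
  have hABu : A ∪ B = S := Finset.filter_union_filter_not_eq _ _
  have hABd : Disjoint A B := Finset.disjoint_filter_filter_not _ _ _
  have hclsB : ∀ i ∈ D, cls B c i = cls S c i := by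
    intro i hi
    ext v
    simp only [mem_cls, hB, Finset.mem_filter]
    constructor
    · tauto
    · rintro ⟨h1, rfl⟩; exact ⟨⟨h1, (Finset.mem_sdiff.1 hi).2⟩, rfl⟩
  have hclsA : ∀ i ∈ 𝒜, cls A c i = cls S c i := by
    intro i hi
    ext v
    simp only [mem_cls, hA, Finset.mem_filter]
    constructor
    · tauto
    · rintro ⟨h1, rfl⟩; exact ⟨⟨h1, hi⟩, rfl⟩
  have hBcard : B.card = k * q + 1 := by
    rw [Finset.card_eq_sum_card_fiberwise (f := c) (t := D) hBD]
    have h1 : ∀ i ∈ D, (B.filter (fun v => c v = i)).card = k + (if i = p then 1 else 0) := by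
      intro i hi
      have h2 : B.filter (fun v => c v = i) = cls S c i := hclsB i hi
      rw [h2]
      split_ifs with hip
      · subst hip; exact hpk
      · have h3 := hc.2.2 i (Finset.mem_sdiff.1 hi).1
        simp only [hip, if_false] at h3
        exact le_antisymm h3 (hbig i (Finset.mem_sdiff.1 hi).1 (Finset.mem_sdiff.1 hi).2)
    rw [Finset.sum_congr rfl h1, Finset.sum_add_distrib]
    simp [hpD, mul_comm, hq]
  have hAne : 𝒜.Nonempty := by
    rw [Finset.nonempty_iff_ne_empty]
    intro h0
    have h1 : a = 0 := by rw [ha, h0]; rfl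
    have h2 := Finset.card_le_card hBS
    have h3 : q = C.card := by omega
    rw [hBcard, h3] at h2
    omega
  have hdS : ∀ x, dg G S x = dg G A x + dg G B x := by
    intro x
    have h := dg_split (G := G) (S := S) (fun v => c v ∈ 𝒜) x
    convert h
  have hdA : ∀ x, dg G A x = ∑ i ∈ 𝒜, dg G (cls S c i) x := by
    intro x
    rw [dg_sum (c := c) (C := 𝒜) (fun v hv => (Finset.mem_filter.1 hv).2) x]
    exact Finset.sum_congr rfl fun i hi => by rw [hclsA i hi]
  have hB1 : ∀ y ∈ B, ∀ i ∈ 𝒜, 1 ≤ dg G (cls S c i) y := by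
    intro y hy i hi
    rw [dg_pos]
    by_contra hno
    push Not at hno
    have hyD := Finset.mem_sdiff.1 (hBD y hy)
    refine hclosed (c y) hyD.1 hyD.2 i hi (mv_iff.2 ⟨?_, y, mem_cls.2 ⟨hBS hy, rfl⟩, hno⟩)
    intro h; exact hyD.2 (h ▸ hi)
  have hBa : ∀ y ∈ B, a ≤ dg G A y := by
    intro y hy
    rw [hdA]
    simpa using Finset.card_nsmul_le_sum 𝒜 _ 1 (hB1 y hy)
  -- colouring B minus a vertex
  have hcB : ∀ y ∈ B, ∃ c2 : V → κ, Col G (B.erase y) D (fun _ => k) c2 := by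
    intro y hy
    have h1 := Finset.card_erase_add_one hy
    have h2 := Finset.card_le_card hBS
    refine IH (B.erase y) D (by omega) (by rw [← hq]; omega) ?_
    intro u hu v hv huv
    have hu := Finset.mem_of_mem_erase hu
    have hv := Finset.mem_of_mem_erase hv
    have h3 := dg_mono (G := G) (Finset.erase_subset y B) u
    have h4 := dg_mono (G := G) (Finset.erase_subset y B) v
    have h5 := hOre u (hBS hu) v (hBS hv) huv
    have h6 := hBa u hu
    have h7 := hBa v hv
    rw [hdS, hdS] at h5
    omega
  obtain ⟨A', hA'A, hA'ne, hterm, hout⟩ := exists_terminal (mv G S c) snk 𝒜 hAne hreach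
  have hzk : ∀ W ∈ 𝒜, ∀ z ∈ cls S c W, 1 ≤ k := fun W hW z hz =>
    le_trans (Finset.card_pos.2 ⟨z, hz⟩) (hAle W hW)
  have hCu : 𝒜 ∪ D = C := Finset.union_sdiff_of_subset hAC
  have hCd : Disjoint 𝒜 D := Finset.disjoint_sdiff
  -- unique neighbour
  have huniq : ∀ W, ∀ z ∈ cls S c W, ∀ y, G.Adj z y → dg G (cls S c W) y = 1 →
      ∀ u ∈ cls S c W, G.Adj y u → u = z := by
    intro W z hz y hzy h1 u hu hyu
    obtain ⟨w, hw⟩ := Finset.card_eq_one.1 h1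
    have e1 : z ∈ nb G (cls S c W) y := mem_nb.2 ⟨hz, hzy.symm⟩
    have e2 : u ∈ nb G (cls S c W) y := mem_nb.2 ⟨hu, hyu⟩
    rw [hw, Finset.mem_singleton] at e1 e2
    rw [e1, e2]
  -- solo vertices are not movable
  have H1 : ∀ W ∈ A', ∀ z ∈ cls S c W, ∀ y ∈ B, G.Adj z y → dg G (cls S c W) y = 1 →
      ∀ X ∈ 𝒜, X ≠ W → 1 ≤ dg G (cls S c X) z := by
    intro W hW z hz y hy hzy hsolo X hX hXW
    by_contra h0
    have h0 : dg G (cls S c X) z = 0 := by omega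
    have hWA := hA'A hW
    have hk := hzk W hWA z hz
    have hz' := mem_cls.1 hz
    obtain ⟨c', hp', hf, hg, hs, hb, hd⟩ := shift G S c k hc.2.1 _ (𝒜.erase W) X rfl
      (hterm W hW X hX hXW)
    have hsW : ∀ v, c' v = W → c v = W := by
      intro v hv
      by_cases h : c v ∈ 𝒜.erase W
      · have := hg v h; rw [hv] at this; simp at this
      · rw [← hf v h, hv]
    have hC1 : Col G (A.erase z) 𝒜 (fun j => if j = X ∨ j = W then k - 1 else k) c' := by
      refine ⟨?_, ?_, ?_⟩
      · intro v hv
        have hv' := (Finset.mem_filter.1 (Finset.mem_of_mem_erase hv)).2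
        by_cases h : c v ∈ 𝒜.erase W
        · exact Finset.mem_of_mem_erase (hg v h)
        · rw [hf v h]; exact hv'
      · intro u hu v hv
        exact hp' u (hAS (Finset.mem_of_mem_erase hu)) v (hAS (Finset.mem_of_mem_erase hv))
      · intro j hj
        have hsub : cls (A.erase z) c' j ⊆ cls S c' j := by
          intro v; simp only [mem_cls, Finset.mem_erase]
          exact fun h => ⟨hAS h.1.2, h.2⟩
        have hle := Finset.card_le_card hsub
        simp only
        by_cases hjX : j = X
        · subst hjX
          simp only [true_or, if_true]
          have := max_le (hAle j hj) le_rfl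
          omega
        by_cases hjW : j = W
        · subst hjW
          simp only [or_true, if_true]
          have hsub : cls (A.erase z) c' j ⊆ (cls S c j).erase z := by
            intro v; simp only [mem_cls, Finset.mem_erase]
            exact fun h => ⟨h.1.1, hAS h.1.2, hsW v h.2⟩
          have h1 := Finset.card_le_card hsub
          have h2 := Finset.card_erase_add_one hz
          have h3 := hAle j hj
          omega
        · simp only [hjX, hjW, or_self, if_false]
          exact hle.trans ((hb j hjX).trans (max_le (hAle j hj) le_rfl))
    have hzA : z ∈ A := Finset.mem_filter.2 ⟨hz'.1, hz'.2 ▸ hWA⟩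
    have hC2 := insert_at hC1 (v := z) (p := X) (by simp) hX (by
      by_contra hne
      obtain ⟨u, hu, hua⟩ := dg_pos.1 (Nat.one_le_iff_ne_zero.2 hne)
      rw [mem_cls, Finset.mem_erase] at hu
      have : 1 ≤ dg G (cls S c X) z := dg_pos.2 ⟨u, mem_cls.2 ⟨hAS hu.1.2, hs u hu.2⟩, hua⟩
      omega)
    rw [Finset.insert_erase hzA] at hC2
    have hyA : y ∉ A := fun h => Finset.disjoint_left.1 hABd h hy
    have hC3 := insert_at hC2 (v := y) (p := W) hyA hWA (by
      by_contra hne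
      obtain ⟨u, hu, hua⟩ := dg_pos.1 (Nat.one_le_iff_ne_zero.2 hne)
      rw [mem_cls] at hu
      by_cases huz : u = z
      · subst huz
        rw [Function.update_self] at hu
        exact hXW hu.2
      · rw [Function.update_of_ne huz] at hu
        exact huz (huniq W z hz y hzy hsolo u (mem_cls.2 ⟨hAS hu.1, hsW u hu.2⟩) hua))
    obtain ⟨c2, hc2⟩ := hcB y hy
    have hC4 : Col G (insert y A) 𝒜 (fun _ => k)
        (Function.update (Function.update c' z X) y W) := by
      refine ⟨hC3.1, hC3.2.1, fun j hj => (hC3.2.2 j hj).trans ?_⟩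
      by_cases hjX : j = X <;> by_cases hjW : j = W
      · exact absurd (hjX.symm.trans hjW) hXW
      all_goals simp only [hjX, hjW, hXW, Ne.symm hXW, true_or, or_true, or_self, if_true, if_false]
      all_goals omega
    have hfin := glue hCd hC4 hc2 (by
      rw [Finset.disjoint_left]
      intro v hv hv'
      rw [Finset.mem_erase] at hv'
      rcases Finset.mem_insert.1 hv with h | h
      · exact hv'.1 h
      · exact Finset.disjoint_left.1 hABd h hv'.2)
    rw [hCu, Finset.insert_union, ← Finset.union_insert, Finset.insert_erase hy, hABu] at hfin
    exact hcon ⟨_, hfin⟩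
  have hAz : ∀ W ∈ A', ∀ z ∈ cls S c W, ∀ y ∈ B, G.Adj z y → dg G (cls S c W) y = 1 →
      a ≤ dg G A z + 1 := by
    intro W hW z hz y hy hzy hsolo
    have h1 : (𝒜.erase W).card ≤ ∑ i ∈ 𝒜.erase W, dg G (cls S c i) z := by
      simpa using Finset.card_nsmul_le_sum (𝒜.erase W) _ 1 (fun X hX =>
        H1 W hW z hz y hy hzy hsolo X (Finset.mem_of_mem_erase hX) (Finset.ne_of_mem_erase hX))
    have h2 := Finset.card_erase_add_one (hA'A hW)
    have h3 : ∑ i ∈ 𝒜.erase W, dg G (cls S c i) z ≤ dg G A z := by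
      rw [hdA]; exact Finset.sum_le_sum_of_subset (Finset.erase_subset _ _)
    omega
  have hBe : ∀ y ∈ B, dg G A y = a + (dg G A y - a) := by
    intro y hy
    have := hBa y hy
    omega
  have hSb : ∀ W ∈ A', ∀ z ∈ cls S c W, ∀ y ∈ B, G.Adj z y → dg G (cls S c W) y = 1 →
      ∀ y' ∈ B, G.Adj z y' → dg G B z + (dg G A y' - a) + dg G B y' + 1 ≤ 2 * q := by
    intro W hW z hz y hy hzy hsolo y' hy' hzy'
    have h1 := hAz W hW z hz y hy hzy hsolo
    have h2 := hOre z (mem_cls.1 hz).1 y' (hBS hy') hzy'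
    have h3 := hBe y' hy'
    rw [hdS, hdS] at h2
    omega
  -- solo neighbours form a clique
  have H2 : ∀ W ∈ A', ∀ z ∈ cls S c W, ∀ y ∈ B, ∀ y' ∈ B, G.Adj z y → G.Adj z y' →
      dg G (cls S c W) y = 1 → dg G (cls S c W) y' = 1 → y ≠ y' → G.Adj y y' := by
    intro W hW z hz y hy y' hy' hzy hzy' hs hs' hyy'
    by_contra hna
    have hWA := hA'A hW
    have hk := hzk W hWA z hz
    have hz' := mem_cls.1 hz
    have hzA : z ∈ A := Finset.mem_filter.2 ⟨hz'.1, hz'.2 ▸ hWA⟩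
    have hzB : z ∉ B := Finset.disjoint_left.1 hABd hzA
    have hyA : y ∉ A := fun h => Finset.disjoint_left.1 hABd h hy
    have hy'A : y' ∉ A := fun h => Finset.disjoint_left.1 hABd h hy'
    have hyz : y ≠ z := hzy.ne'
    obtain ⟨c0, hc0⟩ := hcB y hy
    have hde := dg_erase hy hzy
    have hnz := hSb W hW z hz y hy hzy hs
    obtain ⟨p2, hp2, c2, hc2⟩ := place hc0 (z := z) (fun h => hzB (Finset.mem_of_mem_erase h))
      (by have := hnz y hy hzy; omega)
      (by
        intro hle y1 hy1 hzy1
        have h1 := hnz y1 (Finset.mem_of_mem_erase hy1) hzy1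
        have h2 := dg_mono (G := G) (Finset.erase_subset y B) y1
        omega)
    have hp2A : p2 ∉ 𝒜 := (Finset.mem_sdiff.1 hp2).2
    have hC1 : Col G (A.erase z) 𝒜 (fun j => if j = W then k - 1 else k) c := by
      refine ⟨fun v hv => (Finset.mem_filter.1 (Finset.mem_of_mem_erase hv)).2, ?_, ?_⟩
      · intro u hu v hv
        exact hc.2.1 u (hAS (Finset.mem_of_mem_erase hu)) v (hAS (Finset.mem_of_mem_erase hv))
      · intro j hj
        have hj' := hAle j hj
        simp only
        split_ifs with hjW
        · subst hjW
          have hsub : cls (A.erase z) c j ⊆ (cls S c j).erase z := by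
            intro v; simp only [mem_cls, Finset.mem_erase]
            exact fun h => ⟨h.1.1, hAS h.1.2, h.2⟩
          have h1 := Finset.card_le_card hsub
          have h2 := Finset.card_erase_add_one hz
          omega
        · refine le_trans (Finset.card_le_card ?_) hj'
          intro v; simp only [mem_cls, Finset.mem_erase]
          exact fun h => ⟨hAS h.1.2, h.2⟩
    have hC2 := insert_at hC1 (v := y) (p := W) (fun h => hyA (Finset.mem_of_mem_erase h)) hWA (by
      by_contra hne
      obtain ⟨u, hu, hua⟩ := dg_pos.1 (Nat.one_le_iff_ne_zero.2 hne)
      rw [mem_cls, Finset.mem_erase] at hu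
      exact hu.1.1 (huniq W z hz y hzy hs u (mem_cls.2 ⟨hAS hu.1.2, hu.2⟩) hua))
    set Ast := insert y (A.erase z) with hAst
    set c1 := Function.update c y W with hc1
    have hC3 : Col G Ast 𝒜 (fun i => if i = p2 then k + 1 else k) c1 := by
      refine ⟨hC2.1, hC2.2.1, fun j hj => (hC2.2.2 j hj).trans ?_⟩
      have : j ≠ p2 := by rintro rfl; exact hp2A hj
      simp only [this, if_false]
      split_ifs <;> omega
    have hdisj : Disjoint Ast (insert z (B.erase y)) := by
      rw [Finset.disjoint_left]
      intro v hv hv'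
      simp only [hAst, Finset.mem_insert, Finset.mem_erase] at hv hv'
      rcases hv with rfl | hv
      · rcases hv' with h | h
        · exact hyz h
        · exact h.1 rfl
      · rcases hv' with h | h
        · exact hv.1 h
        · exact Finset.disjoint_left.1 hABd hv.2 h.2
    have hun : Ast ∪ insert z (B.erase y) = S := by
      rw [← hABu]
      ext v
      simp only [hAst, Finset.mem_union, Finset.mem_insert, Finset.mem_erase]
      by_cases h1 : v = y
      · subst h1; simp [hy]
      · by_cases h2 : v = z
        · subst h2; simp [hzA]
        · simp [h1, h2]
    have hfin := glue hCd hC3 hc2 hdisj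
    rw [hun, hCu] at hfin
    set cs : V → κ := fun v => if v ∈ Ast then c1 v else c2 v with hcs
    have hcsB : ∀ v ∈ S, v ∉ Ast → cs v ∈ D := by
      intro v hv hvA
      simp only [hcs, hvA, if_false]
      apply hc2.1
      rw [← hun] at hv
      exact (Finset.mem_union.1 hv).resolve_left hvA
    have hcl : ∀ i ∈ 𝒜, i ≠ W → cls S cs i = cls S c i := by
      intro i hi hiW
      ext v
      simp only [mem_cls]
      constructor
      · rintro ⟨hv, he⟩
        refine ⟨hv, ?_⟩
        by_cases hvA : v ∈ Ast
        · simp only [hcs, hvA, if_true, hc1] at he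
          by_cases hvy : v = y
          · rw [hvy, Function.update_self] at he; exact absurd he.symm hiW
          · rwa [Function.update_of_ne hvy] at he
        · have := hcsB v hv hvA
          rw [he] at this
          exact absurd this (Finset.disjoint_left.1 hCd hi)
      · rintro ⟨hv, he⟩
        refine ⟨hv, ?_⟩
        have hvA : v ∈ A := Finset.mem_filter.2 ⟨hv, he ▸ hi⟩
        have hvz : v ≠ z := by rintro rfl; exact hiW (he.symm.trans hz'.2)
        have hvy : v ≠ y := by rintro rfl; exact hyA hvA
        have hvA' : v ∈ Ast := by simp [hAst, hvA, hvz]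
        simp only [hcs, hvA', if_true, hc1]
        rw [Function.update_of_ne hvy, he]
    have hclW : cls S cs W = insert y ((cls S c W).erase z) := by
      ext v
      simp only [mem_cls, Finset.mem_insert, Finset.mem_erase]
      constructor
      · rintro ⟨hv, he⟩
        by_cases hvA : v ∈ Ast
        · simp only [hcs, hvA, if_true, hc1] at he
          by_cases hvy : v = y
          · exact .inl hvy
          · rw [Function.update_of_ne hvy] at he
            rw [hAst, Finset.mem_insert, Finset.mem_erase] at hvA
            exact .inr ⟨(hvA.resolve_left hvy).1, hv, he⟩
        · have := hcsB v hv hvA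
          rw [he] at this
          exact absurd this (Finset.disjoint_left.1 hCd hWA)
      · rintro (rfl | ⟨hvz, hv, he⟩)
        · refine ⟨hBS hy, ?_⟩
          have hvA' : v ∈ Ast := by simp [hAst]
          simp only [hcs, hvA', if_true, hc1, Function.update_self]
        · have hvA : v ∈ A := Finset.mem_filter.2 ⟨hv, he ▸ hWA⟩
          have hvy : v ≠ y := by rintro rfl; exact hyA hvA
          have hvA' : v ∈ Ast := by simp [hAst, hvA, hvz]
          refine ⟨hv, ?_⟩
          simp only [hcs, hvA', if_true, hc1]
          rw [Function.update_of_ne hvy, he]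
    have hclWc : (cls S cs W).card = (cls S c W).card := by
      rw [hclW, Finset.card_insert_of_notMem, Finset.card_erase_add_one hz]
      intro h
      have := mem_cls.1 (Finset.mem_of_mem_erase h)
      exact hyA (Finset.mem_filter.2 ⟨this.1, this.2 ▸ hWA⟩)
    have hR1 : ∀ X ∈ 𝒜, X ≠ W →
        Reach (mv G S cs) (fun i => (cls S cs i).card < k) C X := by
      intro X hX hXW
      refine (hterm W hW X hX hXW).transport ((Finset.erase_subset _ _).trans hAC) ?_ ?_
      · intro i hi h
        rw [Finset.mem_erase] at hi
        rw [hcl i hi.2 hi.1]; exact h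
      · intro i hi j hj h
        rw [Finset.mem_erase] at hi hj
        rw [mv_iff] at h ⊢
        rwa [hcl i hi.2 hi.1, hcl j hj.2 hj.1]
    have hR2 : Reach (mv G S cs) (fun i => (cls S cs i).card < k) C W := by
      cases hreach W hWA with
      | base _ _ h => exact .base W (hAC hWA) (by rw [hclWc]; exact h)
      | step _ j _ h hr =>
        rw [mv_iff] at h
        obtain ⟨hWj, v, hv, hvn⟩ := h
        have hj := hr.mem
        refine .step W j (hAC hWA) (mv_iff.2 ⟨hWj, v, ?_, ?_⟩) (hR1 j hj hWj.symm)
        · rw [hclW, Finset.mem_insert, Finset.mem_erase]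
          refine .inr ⟨?_, hv⟩
          rintro rfl
          obtain ⟨u, hu, hua⟩ := dg_pos.1 (H1 W hW v hz y hy hzy hs j hj hWj.symm)
          exact hvn u hu hua
        · rw [hcl j hj hWj.symm]; exact hvn
    have hy'D : cs y' ∈ D := hcsB y' (hBS hy') (by
      simp [hAst, hy'A, hyy'.symm])
    have hR3 : Reach (mv G S cs) (fun i => (cls S cs i).card < k) C (cs y') := by
      refine .step _ W (Finset.mem_sdiff.1 hy'D).1 (mv_iff.2 ⟨?_, y', mem_cls.2 ⟨hBS hy', rfl⟩, ?_⟩) hR2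
      · intro h
        rw [h] at hy'D
        exact Finset.disjoint_left.1 hCd hWA hy'D
      · intro u hu hau
        rw [hclW, Finset.mem_insert, Finset.mem_erase] at hu
        rcases hu with rfl | hu
        · exact hna hau.symm
        · exact hu.1 (huniq W z hz y' hzy' hs' u hu.2 hau)
    have hlt : (C \ acc G S C k cs).card < N := by
      rw [← hN]
      apply Finset.card_lt_card
      rw [Finset.ssubset_iff_of_subset]
      · refine ⟨cs y', hy'D, ?_⟩
        simp only [Finset.mem_sdiff, not_and, not_not]
        intro h
        exact Finset.mem_filter.2 ⟨h, hR3⟩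
      · apply Finset.sdiff_subset_sdiff subset_rfl
        intro X hX
        refine Finset.mem_filter.2 ⟨hAC hX, ?_⟩
        by_cases hXW : X = W
        · rw [hXW]; exact hR2
        · exact hR1 X hX hXW
    exact hcon (ihN _ hlt cs p2 (Finset.mem_sdiff.1 hp2).1 hfin rfl)
  refine counting G B A' (cls S c) q k (fun y => dg G A y - a) hqpos hA'ne
    (fun i hi => hAle i (hA'A hi)) (by omega) (fun y hy i hi => hB1 y hy i (hA'A hi)) ?_ ?_ hSb H2
  · intro y hy
    have h1 : ∑ i ∈ A', (dg G (cls S c i) y - 1) ≤ ∑ i ∈ 𝒜, (dg G (cls S c i) y - 1) :=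
      Finset.sum_le_sum_of_subset hA'A
    have h2 : ∑ i ∈ 𝒜, (dg G (cls S c i) y - 1) + a = dg G A y := by
      rw [hdA, ha, Finset.card_eq_sum_ones, ← Finset.sum_add_distrib]
      exact Finset.sum_congr rfl fun i hi => Nat.sub_add_cancel (hB1 y hy i hi)
    omega
  · intro W hW x hx y hy hxy
    have h1 := hOre x (mem_cls.1 hx).1 y (hBS hy) hxy
    have h3 := hBe y hy
    have h4 : a ≤ dg G A x + 1 + A'.card := by
      have e1 := Finset.card_erase_add_one (hA'A hW)
      have e2 := Finset.card_filter_add_card_filter_not (s := 𝒜.erase W)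
        (fun i => 1 ≤ dg G (cls S c i) x)
      have e3 : ((𝒜.erase W).filter (fun i => ¬ 1 ≤ dg G (cls S c i) x)).card ≤ A'.card := by
        refine le_trans (Finset.card_le_card ?_) (hout W hW)
        intro i hi
        rw [Finset.mem_filter] at hi ⊢
        refine ⟨hi.1, mv_iff.2 ⟨(Finset.ne_of_mem_erase hi.1).symm, x, hx, ?_⟩⟩
        intro u hu hau
        exact hi.2 (dg_pos.2 ⟨u, hu, hau⟩)
      have e4 : ((𝒜.erase W).filter (fun i => 1 ≤ dg G (cls S c i) x)).card ≤ dg G A x := by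
        have f1 := Finset.card_nsmul_le_sum
          ((𝒜.erase W).filter (fun i => 1 ≤ dg G (cls S c i) x))
          (fun i => dg G (cls S c i) x) 1 (fun i hi => (Finset.mem_filter.1 hi).2)
        have f2 : ∑ i ∈ (𝒜.erase W).filter (fun i => 1 ≤ dg G (cls S c i) x),
            dg G (cls S c i) x ≤ dg G A x := by
          rw [hdA]
          exact Finset.sum_le_sum_of_subset
            ((Finset.filter_subset _ _).trans (Finset.erase_subset _ _))
        rw [smul_eq_mul, mul_one] at f1
        exact f1.trans f2
      omega
    rw [hdS, hdS] at h1
    omega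

/-- Ore-type Hajnal–Szemerédi theorem (Kierstead–Kostochka). -/
theorem ore_hs [Nonempty κ] (G : SimpleGraph V) (k : ℕ) : ∀ (N : ℕ) (S : Finset V) (C : Finset κ),
    S.card = N → S.card ≤ k * C.card →
    (∀ x ∈ S, ∀ y ∈ S, G.Adj x y → dg G S x + dg G S y + 2 ≤ 2 * C.card) →
    ∃ c : V → κ, Col G S C (fun _ => k) c := by
  intro N
  induction N using Nat.strong_induction_on with
  | _ N ih =>
  intro S C hN hcard hOre
  rcases S.eq_empty_or_nonempty with rfl | hne
  · refine ⟨fun _ => Classical.arbitrary κ, by simp, by intro u hu; simp at hu, ?_⟩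
    intro i _; simp [cls]
  have hCpos : 1 ≤ C.card := by
    by_contra h
    have : C.card = 0 := by omega
    rw [this] at hcard
    have := Finset.card_pos.2 hne
    omega
  have hu : ∃ u ∈ S, dg G S u < C.card := by
    by_cases h : ∃ x ∈ S, ∃ y ∈ S, G.Adj x y
    · obtain ⟨x, hx, y, hy, hxy⟩ := h
      have := hOre x hx y hy hxy
      by_cases h2 : dg G S x < C.card
      · exact ⟨x, hx, h2⟩
      · exact ⟨y, hy, by omega⟩
    · obtain ⟨u, hu⟩ := hne
      refine ⟨u, hu, ?_⟩
      by_contra h2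
      obtain ⟨v, hv, huv⟩ := dg_pos.1 (show 1 ≤ dg G S u by omega)
      exact h ⟨u, hu, v, hv, huv⟩
  obtain ⟨u, huS, hud⟩ := hu
  have hce := Finset.card_erase_add_one huS
  obtain ⟨c, hc⟩ := ih (S.erase u).card (by omega) (S.erase u) C rfl (by omega) (by
    intro x hx y hy hxy
    have h1 := hOre x (Finset.mem_of_mem_erase hx) y (Finset.mem_of_mem_erase hy) hxy
    have h2 := dg_mono (G := G) (Finset.erase_subset u S) x
    have h3 := dg_mono (G := G) (Finset.erase_subset u S) y
    omega)
  obtain ⟨p, hp, c', hc'⟩ := insert_free hc (v := u) (by simp)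
    (lt_of_le_of_lt (dg_mono (Finset.erase_subset u S) u) hud)
  rw [Finset.insert_erase huS] at hc'
  exact step G S C k hcard hOre
    (fun S' C' h1 h2 h3 => ih S'.card (by omega) S' C' rfl h2 h3) _ c' p hp hc' rfl
end

end OreHS

namespace OreHS

theorem EpsRegular_symm {V : Type*} {G : SimpleGraph V} [DecidableRel G.Adj]
    {ε : ℝ} {A B : Finset V} (h : EpsRegular G ε A B) : EpsRegular G ε B A := by
  intro X hX Y hY h1 h2
  rw [G.edgeDensity_comm X Y, G.edgeDensity_comm B A]
  exact h Y hY X hX h2 h1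

theorem RedAdj_symm {V : Type*} {G : SimpleGraph V} [DecidableRel G.Adj] {ε d : ℝ}
    {ℓ : ℕ} {P : Fin ℓ → Finset V} {i j : Fin ℓ} (h : RedAdj G ε d P i j) :
    RedAdj G ε d P j i :=
  ⟨h.1.symm, EpsRegular_symm h.2.1, by rw [G.edgeDensity_comm]; exact h.2.2⟩

/-- Complement of the reduced graph. -/
def coRed {V : Type*} (G : SimpleGraph V) [DecidableRel G.Adj] (ε d : ℝ)
    {ℓ : ℕ} (P : Fin ℓ → Finset V) : SimpleGraph (Fin ℓ) where
  Adj i j := i ≠ j ∧ ¬ RedAdj G ε d P i j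
  symm := ⟨fun _ _ h => ⟨h.1.symm, fun h' => h.2 (RedAdj_symm h')⟩⟩
  loopless := ⟨fun _ h => h.1 rfl⟩

theorem coRed_deg {V : Type*} (G : SimpleGraph V) [DecidableRel G.Adj] (ε d : ℝ)
    {ℓ : ℕ} (P : Fin ℓ → Finset V) (i : Fin ℓ) :
    dg (coRed G ε d P) Finset.univ i + redDeg G ε d P i + 1 = ℓ := by
  classical
  have h1 : redDeg G ε d P i = (Finset.univ.filter (fun j => RedAdj G ε d P i j)).card := by
    unfold redDeg
    rw [← Set.ncard_coe_finset]
    congr 1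
    ext j
    simp
  have h2 : nb (coRed G ε d P) Finset.univ i
      = (Finset.univ.filter (fun j => ¬ RedAdj G ε d P i j)).erase i := by
    ext j
    simp only [mem_nb, Finset.mem_erase, Finset.mem_filter, Finset.mem_univ, true_and, coRed]
    constructor
    · rintro ⟨h, h'⟩; exact ⟨h.symm, h'⟩
    · rintro ⟨h, h'⟩; exact ⟨h.symm, h'⟩
  have h3 : i ∈ Finset.univ.filter (fun j => ¬ RedAdj G ε d P i j) := by
    simp [RedAdj]
  have h4 := Finset.card_erase_add_one h3
  have h5 := Finset.card_filter_add_card_filter_not (s := (Finset.univ : Finset (Fin ℓ)))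
    (fun j => RedAdj G ε d P i j)
  rw [Finset.card_univ, Fintype.card_fin] at h5
  unfold dg
  rw [h2, h1]
  omega

end OreHS

/-- **Lemma (balanced decomposition).** Given clusters `V₁, …, V_ℓ` of size `L` covering
all but at most `εn` vertices, with `ℓ ≥ 2(k-1)/d` and the reduced graph satisfying
`d_R(i)+d_R(j) ≥ 2(1-1/k-d-2ε)ℓ` for nonadjacent `i ≠ j`, there is a collection of
pairwise disjoint groups of `k` clusters, each group forming a clique in the reduced
graph, covering all but at most `2k²dn` vertices of `G`. -/
theorem balanced_decomposition {V : Type*} [Fintype V] [DecidableEq V]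
    (G : SimpleGraph V) [DecidableRel G.Adj]
    (k : ℕ) (hk : 2 ≤ k) (ε d : ℝ) (hε : 0 < ε) (hεd : ε ≤ d / 4)
    (hd0 : 0 < d) (hd1 : d < 1)
    (ℓ L : ℕ) (P : Fin ℓ → Finset V)
    (hdisj : ∀ i j : Fin ℓ, i ≠ j → Disjoint (P i) (P j))
    (hsize : ∀ i, (P i).card = L)
    (hcover : ((Finset.univ \ Finset.univ.biUnion P).card : ℝ) ≤ ε * (Fintype.card V))
    (hℓ : 2 * ((k : ℝ) - 1) / d ≤ (ℓ : ℝ))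
    (hOreR : ∀ i j : Fin ℓ, i ≠ j → ¬ RedAdj G ε d P i j →
      2 * (1 - 1 / (k : ℝ) - d - 2 * ε) * (ℓ : ℝ) ≤
        (redDeg G ε d P i : ℝ) + (redDeg G ε d P j : ℝ)) :
    ∃ 𝒢 : Finset (Finset (Fin ℓ)),
      (∀ S ∈ 𝒢, S.card = k ∧ ∀ i ∈ S, ∀ j ∈ S, i ≠ j → RedAdj G ε d P i j) ∧
      ((𝒢 : Set (Finset (Fin ℓ))).Pairwise fun S T => Disjoint S T) ∧
      ((Finset.univ \ (𝒢.biUnion id).biUnion P).card : ℝ) ≤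
        2 * (k : ℝ) ^ 2 * d * (Fintype.card V) := by
  classical
  have hkR : (2 : ℝ) ≤ k := by exact_mod_cast hk
  have hk0 : (0 : ℝ) < k := by linarith
  set D : ℝ := d * ℓ with hD
  have hDk : 2 * ((k : ℝ) - 1) ≤ D := by
    rw [div_le_iff₀ hd0] at hℓ
    linarith [mul_comm d (ℓ : ℝ)]
  have hD0 : 0 ≤ D := by linarith
  set r : ℕ := ⌈(ℓ : ℝ) / k + 3 / 2 * D⌉₊ with hr
  have hr1 : (ℓ : ℝ) / k + 3 / 2 * D ≤ r := Nat.le_ceil _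
  have hℓk : 0 ≤ (ℓ : ℝ) / k := by positivity
  have hr2 : (r : ℝ) < (ℓ : ℝ) / k + 3 / 2 * D + 1 := Nat.ceil_lt_add_one (by linarith)
  have hkdiv : (k : ℝ) * ((ℓ : ℝ) / k) = ℓ := by field_simp
  have hℓr : ℓ ≤ k * r := by
    have : (ℓ : ℝ) ≤ k * r := by nlinarith [mul_nonneg hk0.le hD0]
    exact_mod_cast this
  have hcol := OreHS.ore_hs (κ := ℕ) (OreHS.coRed G ε d P) k ℓ Finset.univ (Finset.range r)
    (by simp) (by simpa using hℓr) (by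
      intro x _ y _ hxy
      have h1 := hOreR x y hxy.1 hxy.2
      have h2 := OreHS.coRed_deg G ε d P x
      have h3 := OreHS.coRed_deg G ε d P y
      have h2' : (OreHS.dg (OreHS.coRed G ε d P) Finset.univ x : ℝ) + redDeg G ε d P x + 1 = ℓ := by
        exact_mod_cast h2
      have h3' : (OreHS.dg (OreHS.coRed G ε d P) Finset.univ y : ℝ) + redDeg G ε d P y + 1 = ℓ := by
        exact_mod_cast h3
      rw [Finset.card_range]
      have h4 : (OreHS.dg (OreHS.coRed G ε d P) Finset.univ x : ℝ)
          + OreHS.dg (OreHS.coRed G ε d P) Finset.univ y + 2 ≤ 2 * r := by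
        have h5 : ε * ℓ ≤ d / 4 * ℓ := mul_le_mul_of_nonneg_right hεd (Nat.cast_nonneg _)
        have h6 : 2 * (1 - 1 / (k : ℝ) - d - 2 * ε) * (ℓ : ℝ)
            = 2 * ℓ - 2 * ((ℓ : ℝ) / k) - 2 * D - 4 * (ε * ℓ) := by
          rw [hD]; ring
        have h7 : d / 4 * ℓ = D / 4 := by rw [hD]; ring
        linarith
      exact_mod_cast h4)
  obtain ⟨c, hcC, hcP, hcb⟩ := hcol
  have hcC' : ∀ i : Fin ℓ, c i ∈ Finset.range r := fun i => hcC i (Finset.mem_univ _)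
  set K : ℕ → Finset (Fin ℓ) := OreHS.cls Finset.univ c with hK
  have hKm : ∀ i a, i ∈ K a ↔ c i = a := by
    intro i a
    simp [hK, OreHS.mem_cls]
  set F := (Finset.range r).filter (fun a => (K a).card = k) with hF
  set N := (Finset.range r).filter (fun a => ¬ (K a).card = k) with hN
  have hsum : ℓ = ∑ a ∈ Finset.range r, (K a).card := by
    have h := Finset.card_eq_sum_card_fiberwise (s := (Finset.univ : Finset (Fin ℓ))) (f := c)
      (t := Finset.range r) (fun i _ => hcC' i)
    rw [Finset.card_univ, Fintype.card_fin] at h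
    refine h.trans (Finset.sum_congr rfl fun a _ => ?_)
    congr 1
    ext i
    simp [hKm]
  have hsplit : ∑ a ∈ F, (K a).card + ∑ a ∈ N, (K a).card = ℓ := by
    exact (Finset.sum_filter_add_sum_filter_not _ _ _).trans hsum.symm
  have hFsum : ∑ a ∈ F, (K a).card = F.card * k := by
    rw [Finset.sum_const_nat]
    intro a ha
    exact (Finset.mem_filter.1 ha).2
  have hNsum : ∑ a ∈ N, (K a).card ≤ N.card * (k - 1) := by
    rw [← smul_eq_mul]
    refine Finset.sum_le_card_nsmul _ _ _ fun a ha => ?_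
    have h1 := Finset.mem_filter.1 ha
    have h2 : (K a).card ≤ k := hcb a h1.1
    have h3 := h1.2
    omega
  have hFN : F.card + N.card = r := by
    have := Finset.card_filter_add_card_filter_not (s := Finset.range r)
      (fun a => (K a).card = k)
    rw [Finset.card_range] at this
    exact this
  have hFk : (F.card : ℝ) * k + ((∑ a ∈ N, (K a).card : ℕ) : ℝ) = ℓ := by
    rw [hFsum] at hsplit
    exact_mod_cast hsplit
  have hNk : ((∑ a ∈ N, (K a).card : ℕ) : ℝ) ≤ N.card * ((k : ℝ) - 1) := by
    have h : ((∑ a ∈ N, (K a).card : ℕ) : ℝ) ≤ ((N.card * (k - 1) : ℕ) : ℝ) := by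
      exact_mod_cast hNsum
    rw [Nat.cast_mul, Nat.cast_sub (by omega)] at h
    simpa using h
  have hFN' : (F.card : ℝ) + N.card = r := by exact_mod_cast hFN
  set u : ℝ := ((∑ a ∈ N, (K a).card : ℕ) : ℝ) with hu
  have hm : (N.card : ℝ) ≤ k * r - ℓ := by nlinarith
  have hm2 : (k : ℝ) * r - ℓ ≤ 3 / 2 * k * D + k := by nlinarith
  have hub : u ≤ (2 * (k : ℝ) ^ 2 - 1 / 4) * D := by
    have h1 : (N.card : ℝ) * ((k : ℝ) - 1) ≤ (3 / 2 * k * D + k) * ((k : ℝ) - 1) :=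
      mul_le_mul_of_nonneg_right (hm.trans hm2) (by linarith)
    have h2 : (k : ℝ) * (2 * ((k : ℝ) - 1)) ≤ k * D := mul_le_mul_of_nonneg_left hDk hk0.le
    have h3 : 0 ≤ ((k : ℝ) ^ 2 / 2 + k - 1 / 4) * D := by
      refine mul_nonneg ?_ hD0
      nlinarith
    nlinarith
  refine ⟨F.image K, ?_, ?_, ?_⟩
  · intro S hS
    obtain ⟨a, ha, rfl⟩ := Finset.mem_image.1 hS
    refine ⟨(Finset.mem_filter.1 ha).2, ?_⟩
    intro i hi j hj hij
    by_contra hno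
    exact hcP i (Finset.mem_univ _) j (Finset.mem_univ _) ⟨hij, hno⟩
      (((hKm i a).1 hi).trans ((hKm j a).1 hj).symm)
  · intro S hS T hT hST
    obtain ⟨a, ha, rfl⟩ := Finset.mem_image.1 (Finset.mem_coe.1 hS)
    obtain ⟨b, hb, rfl⟩ := Finset.mem_image.1 (Finset.mem_coe.1 hT)
    rw [Finset.disjoint_left]
    intro i hi hi'
    rw [hKm] at hi hi'
    exact hST (by rw [← hi, ← hi'])
  · have hsub : Finset.univ \ ((F.image K).biUnion id).biUnion P
        ⊆ (Finset.univ \ Finset.univ.biUnion P) ∪ (N.biUnion K).biUnion P := by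
      intro v hv
      by_cases hv2 : v ∈ Finset.univ.biUnion P
      · obtain ⟨i, -, hi⟩ := Finset.mem_biUnion.1 hv2
        refine Finset.mem_union_right _ (Finset.mem_biUnion.2 ⟨i, ?_, hi⟩)
        refine Finset.mem_biUnion.2 ⟨c i, ?_, (hKm i _).2 rfl⟩
        refine Finset.mem_filter.2 ⟨hcC' i, fun hfull => ?_⟩
        refine (Finset.mem_sdiff.1 hv).2 (Finset.mem_biUnion.2 ⟨i, ?_, hi⟩)
        refine Finset.mem_biUnion.2 ⟨K (c i), Finset.mem_image_of_mem _
          (Finset.mem_filter.2 ⟨hcC' i, hfull⟩), (hKm i _).2 rfl⟩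
      · exact Finset.mem_union_left _ (Finset.mem_sdiff.2 ⟨Finset.mem_univ _, hv2⟩)
    have h1 : (Finset.univ \ ((F.image K).biUnion id).biUnion P).card
        ≤ (Finset.univ \ Finset.univ.biUnion P).card + (∑ a ∈ N, (K a).card) * L := by
      refine (Finset.card_le_card hsub).trans ((Finset.card_union_le _ _).trans ?_)
      refine Nat.add_le_add_left ?_ _
      refine (Finset.card_biUnion_le_card_mul _ _ L (fun i _ => (hsize i).le)).trans ?_
      exact Nat.mul_le_mul_right _ Finset.card_biUnion_le
    have h2 : ((Finset.univ \ ((F.image K).biUnion id).biUnion P).card : ℝ)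
        ≤ ((Finset.univ \ Finset.univ.biUnion P).card : ℝ) + u * L := by
      rw [hu]
      exact_mod_cast h1
    have h3 : ℓ * L ≤ Fintype.card V := by
      have h4 : (Finset.univ.biUnion P).card = ∑ i : Fin ℓ, (P i).card :=
        Finset.card_biUnion fun i _ j _ hij => hdisj i j hij
      simp only [hsize, Finset.sum_const, Finset.card_univ, Fintype.card_fin, smul_eq_mul] at h4
      rw [← h4]
      exact Finset.card_le_univ _
    have h3' : (ℓ : ℝ) * L ≤ Fintype.card V := by exact_mod_cast h3
    have h5 : u * L ≤ (2 * (k : ℝ) ^ 2 - 1 / 4) * d * Fintype.card V := by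
      calc u * L ≤ (2 * (k : ℝ) ^ 2 - 1 / 4) * D * L :=
            mul_le_mul_of_nonneg_right hub (Nat.cast_nonneg _)
        _ = (2 * (k : ℝ) ^ 2 - 1 / 4) * d * (ℓ * L) := by rw [hD]; ring
        _ ≤ _ := mul_le_mul_of_nonneg_left h3' (mul_nonneg (by nlinarith) hd0.le)
    have h6 : ε * (Fintype.card V : ℝ) ≤ d / 4 * Fintype.card V :=
      mul_le_mul_of_nonneg_right hεd (Nat.cast_nonneg _)
    refine (h2.trans (add_le_add (hcover.trans h6) h5)).trans (le_of_eq ?_)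
    ring
end

section
/- Let k ≥ 2 be an integer, let R be a graph on ℓ vertices with k dividing ℓ, and let 𝒫 be a partition of V(R) into ℓ/k parts, each of size k. Let d, ε ≥ 0 be reals with k(d + 2ε) + k²/ℓ ≤ 1/2. Define a directed graph D on V(R) by putting an edge from U to W (for U ≠ W) if and only if W belongs to a part P ∈ 𝒫 with U ∉ P and U is adjacent in R to every vertex of P \ {W}. Then every vertex U of R with d_R(U) ≥ (1 − 1/k − d − 2ε)·ℓ satisfies d⁺_D(U) ≥ ℓ/(2k). -/
lemma card_filter_parts {V : Type*} [Fintype V] [DecidableEq V]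
    (Part : Finpartition (Finset.univ : Finset V)) (p : V → Prop) [DecidablePred p] :
    (Finset.univ.filter p).card = ∑ P ∈ Part.parts, (P.filter p).card := by
  have h : (Finset.univ.filter p) = Part.parts.biUnion (fun P => P.filter p) := by
    rw [← Finset.filter_biUnion]
    congr 1
    exact Part.biUnion_parts.symm
  rw [h, Finset.card_biUnion]
  intro P hP Q hQ hne
  exact Finset.disjoint_filter_filter (Part.disjoint hP hQ hne)


/-- **Proposition (out-degree in the transfer digraph).** Let `R` be a graph on `ℓ`
vertices with `k ∣ ℓ`, and let `Part` be a partition of `V(R)` into parts of size `k`.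
Suppose `k(d + 2ε) + k²/ℓ ≤ 1/2`.  In the directed graph `D` with an edge from `U` to
`W ≠ U` iff `W` lies in a part `P` with `U ∉ P` and `U` is adjacent in `R` to every
vertex of `P \ {W}`, every vertex `U` with `d_R(U) ≥ (1 - 1/k - d - 2ε)ℓ` has
out-degree at least `ℓ/(2k)`. -/
theorem transfer_digraph_outdegree {V : Type*} [Fintype V] [DecidableEq V]
    (R : SimpleGraph V) [DecidableRel R.Adj]
    (k : ℕ) (hk : 2 ≤ k) (hdvd : k ∣ Fintype.card V)
    (Part : Finpartition (Finset.univ : Finset V))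
    (hparts : ∀ P ∈ Part.parts, P.card = k)
    (d ε : ℝ) (hd : 0 ≤ d) (hε : 0 ≤ ε)
    (hsmall : (k : ℝ) * (d + 2 * ε) + (k : ℝ) ^ 2 / (Fintype.card V : ℝ) ≤ 1 / 2)
    (U : V)
    (hU : (1 - 1 / (k : ℝ) - d - 2 * ε) * (Fintype.card V : ℝ) ≤ (R.degree U : ℝ)) :
    (Fintype.card V : ℝ) / (2 * (k : ℝ)) ≤
      ({W : V | U ≠ W ∧ ∃ P ∈ Part.parts, W ∈ P ∧ U ∉ P ∧
        ∀ x ∈ P, x ≠ W → R.Adj U x}.ncard : ℝ) := by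
  classical
  set p : V → Prop := fun W => U ≠ W ∧ ∃ P ∈ Part.parts, W ∈ P ∧ U ∉ P ∧
        ∀ x ∈ P, x ≠ W → R.Adj U x with hp
  have hS : {W : V | p W}.ncard = (Finset.univ.filter p).card := by
    rw [← Set.ncard_coe_finset]
    congr 1
    ext; simp
  have hpt : ∀ P ∈ Part.parts, 2 ≤ (P.filter p).card + (P.filter (fun x => ¬ R.Adj U x)).card
      + (P.filter (fun x => x = U)).card := by
    intro P hP
    have hc := hparts P hP
    by_cases hUP : U ∈ P
    · have h1 : 0 < (P.filter (fun x => ¬ R.Adj U x)).card :=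
        Finset.card_pos.mpr ⟨U, by simp [hUP]⟩
      have h2 : 0 < (P.filter (fun x => x = U)).card :=
        Finset.card_pos.mpr ⟨U, by simp [hUP]⟩
      omega
    · by_cases hb : 2 ≤ (P.filter (fun x => ¬ R.Adj U x)).card
      · omega
      · by_cases h0 : (P.filter (fun x => ¬ R.Adj U x)).card = 0
        · rw [Finset.card_eq_zero, Finset.filter_eq_empty_iff] at h0
          have : P.filter p = P := by
            rw [Finset.filter_eq_self]
            intro W hW
            exact ⟨fun h => hUP (h ▸ hW), P, hP, hW, hUP, fun x hx _ => not_not.mp (h0 hx)⟩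
          rw [this]; omega
        · have h1 : (P.filter (fun x => ¬ R.Adj U x)).card = 1 := by omega
          obtain ⟨w, hw⟩ := Finset.card_eq_one.mp h1
          have hwP : w ∈ P := by
            have : w ∈ P.filter (fun x => ¬ R.Adj U x) := by rw [hw]; simp
            exact (Finset.mem_filter.mp this).1
          have : 0 < (P.filter p).card := by
            refine Finset.card_pos.mpr ⟨w, Finset.mem_filter.mpr ⟨hwP, fun h => hUP (h ▸ hwP),
              P, hP, hwP, hUP, fun x hx hne => ?_⟩⟩
            by_contra hadj
            have : x ∈ P.filter (fun x => ¬ R.Adj U x) := Finset.mem_filter.mpr ⟨hx, hadj⟩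
            rw [hw] at this
            exact hne (Finset.mem_singleton.mp this)
          omega
  have hsum := Finset.sum_le_sum hpt
  rw [Finset.sum_add_distrib, Finset.sum_add_distrib, ← card_filter_parts,
    ← card_filter_parts, ← card_filter_parts, Finset.sum_const, smul_eq_mul] at hsum
  have hone : (Finset.univ.filter (fun x => x = U)).card = 1 := by
    rw [Finset.card_eq_one]; exact ⟨U, by ext; simp⟩
  have hm : Part.parts.card * k = Fintype.card V := by
    have := Part.sum_card_parts
    rw [Finset.sum_congr rfl hparts, Finset.sum_const, smul_eq_mul, Finset.card_univ] at this
    exact this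
  have hdeg : R.degree U + (Finset.univ.filter (fun x => ¬ R.Adj U x)).card = Fintype.card V := by
    rw [← SimpleGraph.card_neighborFinset_eq_degree, SimpleGraph.neighborFinset_eq_filter,
      Finset.card_filter_add_card_filter_not, Finset.card_univ]
  rw [hone] at hsum
  have hpos : 0 < Fintype.card V := Fintype.card_pos_iff.mpr ⟨U⟩
  change _ ≤ (({W : V | p W}.ncard : ℕ) : ℝ)
  rw [hS]
  generalize (Finset.univ.filter p).card = s at *
  generalize (Finset.univ.filter (fun x => ¬ R.Adj U x)).card = b at *
  generalize Part.parts.card = m at *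
  generalize R.degree U = g at *
  generalize Fintype.card V = l at *
  have hsumR : (m : ℝ) * 2 ≤ s + b + 1 := by exact_mod_cast hsum
  have hmR : (m : ℝ) * k = l := by exact_mod_cast hm
  have hdR : (g : ℝ) + b = l := by exact_mod_cast hdeg
  have hkR : (2 : ℝ) ≤ k := by exact_mod_cast hk
  have hlR : (0 : ℝ) < l := by exact_mod_cast hpos
  have hk0 : (0 : ℝ) < k := by linarith
  have e1 : (l : ℝ) / (2 * k) = m / 2 := by rw [← hmR]; field_simp
  have hm0 : (0 : ℝ) < m := by
    by_contra h
    nlinarith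
  have e2 : (k : ℝ) ^ 2 / l = k / m := by rw [← hmR]; field_simp
  have e3 : (1 - 1 / (k : ℝ) - d - 2 * ε) * l = l - m - (d + 2 * ε) * l := by
    rw [← hmR]; field_simp
    try ring
  rw [e1]
  rw [e3] at hU
  rw [e2] at hsmall
  have h4 : (k * (d + 2 * ε) + k / m) * m ≤ 1 / 2 * (m : ℝ) :=
    mul_le_mul_of_nonneg_right hsmall hm0.le
  have h5 : (k * (d + 2 * ε) + k / m) * m = (d + 2 * ε) * l + k := by
    rw [← hmR]; field_simp
  linarith
end

section
/- (Kierstead–Kostochka.) Let r ≥ 1 and let G be a graph on n vertices with r dividing n. If d(x) + d(y) ≥ 2(1 − 1/r)·n − 1 for all nonadjacent vertices x, y ∈ V(G), then G contains a K_r-factor, i.e., a collection of pairwise vertex-disjoint complete subgraphs on r vertices covering every vertex of G. -/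
namespace KK
open Classical Finset

/-- number of neighbours of `v` in `X` -/
noncomputable def dg {V : Type*} (G : SimpleGraph V) (X : Finset V) (v : V) : ℕ :=
  (X.filter (fun w => G.Adj v w)).card

/-- `c` is a proper colouring of `G[X]` with colours in `K` -/
def Col {V : Type*} (G : SimpleGraph V) (X : Finset V) (K : Finset ℕ) (c : V → ℕ) : Prop :=
  (∀ v ∈ X, c v ∈ K) ∧ ∀ u ∈ X, ∀ v ∈ X, G.Adj u v → c u ≠ c v

/-- size of colour class `i` -/
noncomputable def sz {V : Type*} (X : Finset V) (c : V → ℕ) (i : ℕ) : ℕ :=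
  (X.filter (fun v => c v = i)).card

/-- some vertex of class `i` is movable to class `j` -/
def Mv {V : Type*} (G : SimpleGraph V) (X : Finset V) (c : V → ℕ) (i j : ℕ) : Prop :=
  ∃ v ∈ X, c v = i ∧ ∀ w ∈ X, c w = j → ¬ G.Adj v w

/-- a set of classes each of which can reach `i0` inside the set -/
inductive Reach (R : ℕ → ℕ → Prop) (i0 : ℕ) : Finset ℕ → Prop
  | base : Reach R i0 {i0}
  | step (S : Finset ℕ) (W j : ℕ) : Reach R i0 S → W ∉ S → j ∈ S → R W j → Reach R i0 (insert W S)

lemma Reach.mem {R : ℕ → ℕ → Prop} {i0 : ℕ} {S : Finset ℕ} (h : Reach R i0 S) : i0 ∈ S := by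
  induction h with
  | base => simp
  | step S W j _ _ _ _ ih => exact mem_insert_of_mem ih

lemma Reach.mono {R R' : ℕ → ℕ → Prop} {i0 : ℕ} {S : Finset ℕ} (h : Reach R i0 S)
    (hR : ∀ i ∈ S, ∀ j ∈ S, R i j → R' i j) : Reach R' i0 S := by
  induction h with
  | base => exact .base
  | step S W j _ hW hj hr ih =>
    refine .step S W j (ih fun i hi j hj => hR i (mem_insert_of_mem hi) j (mem_insert_of_mem hj)) hW hj
      (hR W (mem_insert_self _ _) j (mem_insert_of_mem hj) hr)

lemma Reach.cross {R : ℕ → ℕ → Prop} {i0 : ℕ} {S : Finset ℕ} (h : Reach R i0 S)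
    (S' : Finset ℕ) (h0 : i0 ∈ S') (hS : ¬ S ⊆ S') : ∃ W ∈ S, W ∉ S' ∧ ∃ j ∈ S', R W j := by
  induction h with
  | base => exact absurd (by simpa using h0) hS
  | step S W j _ hW hj hr ih =>
    by_cases hs : S ⊆ S'
    · refine ⟨W, mem_insert_self _ _, fun hW' => hS (insert_subset hW' hs), j, hs hj, hr⟩
    · obtain ⟨W', h1, h2⟩ := ih hs
      exact ⟨W', mem_insert_of_mem h1, h2⟩

/-- choice of the family of terminal classes -/
lemma Reach.terminal {R : ℕ → ℕ → Prop} {i0 : ℕ} {S : Finset ℕ} (h : Reach R i0 S) :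
    ∃ (T : Finset ℕ) (U : ℕ), T ⊆ S ∧ T.Nonempty ∧ U ∈ S ∧
      (∀ W ∈ T, (S = {i0} ∧ W = i0) ∨ (W ≠ i0 ∧ Reach R i0 (S.erase W))) ∧
      ∀ W ∈ T, ∀ j ∈ S, j ∉ T → j ≠ U → ¬ R W j := by
  by_cases hS : S = {i0}
  · subst hS
    refine ⟨{i0}, i0, by simp, by simp, by simp, by simp, ?_⟩
    intro W _ j hj hj'
    exact absurd hj hj'
  let P : Finset ℕ → ℕ → Prop := fun S1 U => S1 ⊆ S ∧ U ∈ S ∧ U ∉ S1 ∧ Reach R i0 (insert U S1) ∧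
    insert U S1 ≠ S ∧ ∀ W ∈ S, W ∉ S1 → W ≠ U → ∀ j ∈ S1, ¬ R W j
  have hex : ∃ S1 ∈ S.powerset, ∃ U, P S1 U :=
    ⟨∅, by simp, i0, by simp, h.mem, by simp, by simpa using Reach.base, by simpa using Ne.symm hS, by simp⟩
  obtain ⟨S1, hS1, hmax⟩ := (S.powerset.filter (fun S1 => ∃ U, P S1 U)).exists_max_image card
    (by obtain ⟨S1, h1, h2⟩ := hex; exact ⟨S1, mem_filter.2 ⟨h1, h2⟩⟩)
  obtain ⟨U, hU1, hU2, hU3, hU4, hU5, hU6⟩ := (mem_filter.1 hS1).2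
  have hsub : insert U S1 ⊆ S := insert_subset hU2 hU1
  refine ⟨S \ insert U S1, U, sdiff_subset, ?_, hU2, ?_, ?_⟩
  · rw [sdiff_nonempty]
    exact fun h' => hU5 (subset_antisymm hsub h')
  · intro W hW
    simp only [mem_sdiff, mem_insert, not_or] at hW
    obtain ⟨hWS, hWU, hWS1⟩ := hW
    have hW0 : W ≠ i0 := by
      rintro rfl
      have := hU4.mem
      simp only [mem_insert] at this
      tauto
    refine Or.inr ⟨hW0, ?_⟩
    obtain ⟨S2, hS2, hmax2⟩ := ((S.erase W).powerset.filter
      (fun S2 => insert U S1 ⊆ S2 ∧ Reach R i0 S2)).exists_max_image card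
      ⟨insert U S1, by
        simp only [mem_filter, mem_powerset]
        refine ⟨?_, subset_refl _, hU4⟩
        intro x hx
        refine mem_erase.2 ⟨?_, hsub hx⟩
        rintro rfl
        simp only [mem_insert] at hx
        tauto⟩
    simp only [mem_filter, mem_powerset] at hS2 hmax2
    obtain ⟨h21, h22, h23⟩ := hS2
    have hWS2 : W ∉ S2 := fun hh => by simpa using h21 hh
    have hno : ∀ W' ∈ S, W' ∉ S2 → W' ≠ W → ∀ j ∈ S2, ¬ R W' j := by
      intro W' h1 h2 h3 j hj hr
      have := hmax2 (insert W' S2) ⟨insert_subset (mem_erase.2 ⟨h3, h1⟩) h21,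
        h22.trans (subset_insert _ _), .step S2 W' j h23 h2 hj hr⟩
      rw [card_insert_of_notMem h2] at this
      omega
    by_cases hfin : S2 = S.erase W
    · rw [← hfin]; exact h23
    exfalso
    have hS2S : S2 ⊆ S := h21.trans (erase_subset _ _)
    obtain ⟨W', h1, h2, j, hj, hr⟩ := h.cross S2 h23.mem (fun hh => hWS2 (hh hWS))
    have hWW : W' = W := by
      by_contra hne
      exact hno W' h1 h2 hne j hj hr
    subst hWW
    have hP : P S2 W' := by
      refine ⟨hS2S, hWS, hWS2, .step S2 W' j h23 hWS2 hj hr, ?_, hno⟩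
      intro heq
      apply hfin
      rw [← heq, erase_insert hWS2]
    have := hmax S2 (mem_filter.2 ⟨mem_powerset.2 hS2S, W', hP⟩)
    have h3 := card_le_card h22
    rw [card_insert_of_notMem hU3] at h3
    omega
  · intro W hW j hj hjT hjU
    simp only [mem_sdiff, mem_insert, not_or, not_and, not_not] at hW hjT
    have : j ∈ S1 := by tauto
    exact hU6 W hW.1 hW.2.2 hW.2.1 j this

section
variable {V : Type*} {G : SimpleGraph V} {X A B : Finset V} {K S : Finset ℕ} {c : V → ℕ}

lemma sz_update {v : V} (hv : v ∈ X) (j i : ℕ) :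
    sz X (Function.update c v j) i + (if i = c v then 1 else 0) = sz X c i + (if i = j then 1 else 0) := by
  have h1 : ∀ f : V → ℕ, sz X f i = sz (X.erase v) f i + if i = f v then 1 else 0 := by
    intro f
    unfold sz
    conv_lhs => rw [← insert_erase hv]
    rw [filter_insert]
    split_ifs with h1 h2 h2
    · rw [card_insert_of_notMem (by simp)]
    · exact absurd h1.symm h2
    · exact absurd h2.symm h1
    · rfl
  have h2 : sz (X.erase v) (Function.update c v j) i = sz (X.erase v) c i := by
    unfold sz
    congr 1
    apply filter_congr
    intro w hw
    rw [Function.update_of_ne (ne_of_mem_erase hw)]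
  rw [h1 (Function.update c v j), h1 c, h2]
  simp only [Function.update_self]
  omega

lemma sz_erase {v : V} (hv : v ∈ X) (i : ℕ) :
    sz (X.erase v) c i + (if i = c v then 1 else 0) = sz X c i := by
  unfold sz
  conv_rhs => rw [← insert_erase hv]
  rw [filter_insert]
  split_ifs with h1 h2 h2
  · rw [card_insert_of_notMem (by simp)]
  · exact absurd h1.symm h2
  · exact absurd h2.symm h1
  · rfl

lemma sz_insert {v : V} (hv : v ∉ X) (j i : ℕ) :
    sz (insert v X) (Function.update c v j) i = sz X c i + (if i = j then 1 else 0) := by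
  have h := sz_erase (X := insert v X) (c := Function.update c v j) (mem_insert_self v X) i
  rw [erase_insert hv, Function.update_self] at h
  rw [← h]
  congr 1
  unfold sz
  congr 1
  apply filter_congr
  intro w hw
  rw [Function.update_of_ne (by rintro rfl; exact hv hw)]

lemma shift {i0 : ℕ} (hcol : Col G X K c) (hA : Reach (Mv G X c) i0 S) (hSK : S ⊆ K) :
    ∀ i ∈ S, ∃ c', Col G X K c' ∧ (∀ v, c v ∉ S → c' v = c v) ∧ (∀ v ∈ X, c v ∈ S → c' v ∈ S) ∧
      (∀ v ∈ X, c' v = i → c v = i) ∧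
      (∀ j, sz X c' j + (if j = i then 1 else 0) = sz X c j + (if j = i0 then 1 else 0)) := by
  induction hA with
  | base =>
    intro i hi
    rw [mem_singleton] at hi
    subst hi
    exact ⟨c, hcol, fun _ _ => rfl, fun _ _ h => h, fun _ _ h => h, fun _ => rfl⟩
  | step S W j hS hW hj hr ih =>
    have ih := ih ((subset_insert _ _).trans hSK)
    intro i hi
    by_cases hiS : i ∈ S
    · obtain ⟨c', h1, h2, h3, h4, h5⟩ := ih i hiS
      refine ⟨c', h1, fun v hv => h2 v fun hh => hv (mem_insert_of_mem hh), ?_, h4, h5⟩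
      intro v hv hcv
      by_cases hvS : c v ∈ S
      · exact mem_insert_of_mem (h3 v hv hvS)
      · rw [h2 v hvS]; exact hcv
    have hiW : i = W := by
      rcases mem_insert.1 hi with h | h
      · exact h
      · exact absurd h hiS
    subst hiW
    obtain ⟨c', h1, h2, h3, h4, h5⟩ := ih j hj
    obtain ⟨v, hv, hcv, hvn⟩ := hr
    have hij : j ≠ i := by rintro rfl; exact hiS hj
    have hc'v : c' v = i := by rw [h2 v (by rwa [hcv]), hcv]
    refine ⟨Function.update c' v j, ⟨?_, ?_⟩, ?_, ?_, ?_, ?_⟩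
    · intro u hu
      by_cases huv : u = v
      · subst huv; rw [Function.update_self]; exact hSK (mem_insert_of_mem hj)
      · rw [Function.update_of_ne huv]; exact h1.1 u hu
    · intro u hu w hw huw
      by_cases huv : u = v
      · subst huv
        rw [Function.update_self, Function.update_of_ne huw.ne']
        intro hh
        exact hvn w hw (h4 w hw hh.symm) huw
      · rw [Function.update_of_ne huv]
        by_cases hwv : w = v
        · subst hwv
          rw [Function.update_self]
          intro hh
          exact hvn u hu (h4 u hu hh) huw.symm
        · rw [Function.update_of_ne hwv]
          exact h1.2 u hu w hw huw
    · intro u hu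
      have huv : u ≠ v := by rintro rfl; rw [hcv] at hu; exact hu (mem_insert_self _ _)
      rw [Function.update_of_ne huv]
      exact h2 u fun hh => hu (mem_insert_of_mem hh)
    · intro u hu hcu
      by_cases huv : u = v
      · subst huv; rw [Function.update_self]; exact mem_insert_of_mem hj
      · rw [Function.update_of_ne huv]
        by_cases huS : c u ∈ S
        · exact mem_insert_of_mem (h3 u hu huS)
        · rw [h2 u huS]; exact hcu
    · intro u hu hcu
      by_cases huv : u = v
      · subst huv; exact hcv
      · rw [Function.update_of_ne huv] at hcu
        by_cases huS : c u ∈ S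
        · have := h3 u hu huS
          rw [hcu] at this
          exact absurd this hiS
        · rw [← h2 u huS]; exact hcu
    · intro l
      have e1 := sz_update (c := c') hv j l
      rw [hc'v] at e1
      have e2 := h5 l
      omega

/-- gluing two colourings on disjoint colour sets -/
lemma glue {cA cB : V → ℕ} (hd : Disjoint A B) (hSK : S ⊆ K) (hA : Col G A S cA) (hB : Col G B (K \ S) cB) :
    Col G (A ∪ B) K (fun v => if v ∈ A then cA v else cB v) ∧
    (∀ i ∈ S, sz (A ∪ B) (fun v => if v ∈ A then cA v else cB v) i = sz A cA i) ∧
    (∀ i ∈ K \ S, sz (A ∪ B) (fun v => if v ∈ A then cA v else cB v) i = sz B cB i) := by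
  have hBA : ∀ v ∈ B, v ∉ A := fun v hv hv' => disjoint_left.1 hd hv' hv
  refine ⟨⟨?_, ?_⟩, ?_, ?_⟩
  · intro v hv
    dsimp only
    split_ifs with h
    · exact hSK (hA.1 v h)
    · exact (mem_sdiff.1 (hB.1 v (by simpa [h] using hv))).1
  · intro u hu v hv huv
    dsimp only
    split_ifs with h1 h2 h2
    · exact hA.2 u h1 v h2 huv
    · have := hA.1 u h1
      have h4 := (mem_sdiff.1 (hB.1 v (by simpa [h2] using hv))).2
      intro hh; rw [hh] at this; exact h4 this
    · have := hA.1 v h2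
      have h4 := (mem_sdiff.1 (hB.1 u (by simpa [h1] using hu))).2
      intro hh; rw [← hh] at this; exact h4 this
    · exact hB.2 u (by simpa [h1] using hu) v (by simpa [h2] using hv) huv
  · intro i hi
    unfold sz
    congr 1
    ext v
    simp only [mem_filter, mem_union]
    constructor
    · rintro ⟨h1, h2⟩
      split_ifs at h2 with h
      · exact ⟨h, h2⟩
      · have := hB.1 v (by tauto)
        rw [h2] at this
        exact absurd hi (mem_sdiff.1 this).2
    · rintro ⟨h1, h2⟩
      simp [h1, h2]
  · intro i hi
    unfold sz
    congr 1
    ext v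
    simp only [mem_filter, mem_union]
    constructor
    · rintro ⟨h1, h2⟩
      split_ifs at h2 with h
      · have := hA.1 v h
        rw [h2] at this
        exact absurd this (mem_sdiff.1 hi).2
      · exact ⟨by tauto, h2⟩
    · rintro ⟨h1, h2⟩
      simp [h1, h2, hBA v h1]

lemma card_le_dg {T : Finset ℕ} {v : V} (h : ∀ j ∈ T, ∃ w ∈ X, c w = j ∧ G.Adj v w) : T.card ≤ dg G X v := by
  unfold dg
  refine le_trans (card_le_card ?_) (card_image_le (f := c))
  intro j hj
  obtain ⟨w, hw, h1, h2⟩ := h j hj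
  exact mem_image.2 ⟨w, mem_filter.2 ⟨hw, h2⟩, h1⟩

lemma dg_mono (h : A ⊆ X) (v : V) : dg G A v ≤ dg G X v := card_le_card (filter_subset_filter _ h)

lemma dg_erase {w v : V} (hw : w ∈ X) : dg G (X.erase w) v + (if G.Adj v w then 1 else 0) = dg G X v := by
  unfold dg
  conv_rhs => rw [← insert_erase hw]
  rw [filter_insert]
  split_ifs with h1
  · rw [card_insert_of_notMem (by simp)]
  · rfl

lemma dg_insert {w v : V} (hw : w ∉ X) : dg G (insert w X) v = dg G X v + (if G.Adj v w then 1 else 0) := by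
  have := dg_erase (G := G) (v := v) (mem_insert_self w X)
  rw [erase_insert hw] at this
  exact this.symm

lemma dg_union (h : Disjoint A B) (v : V) : dg G (A ∪ B) v = dg G A v + dg G B v := by
  unfold dg
  rw [filter_union, card_union_of_disjoint (disjoint_filter_filter h)]

lemma card_eq_sum_sz (hc : ∀ v ∈ X, c v ∈ K) : X.card = ∑ i ∈ K, sz X c i :=
  card_eq_sum_card_fiberwise hc

/-- the class `W` can be modified keeping all of `S` accessible -/
def Q (G : SimpleGraph V) (A : Finset V) (c : V → ℕ) (S : Finset ℕ) (W i0 : ℕ) : Prop :=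
  Col G A S c ∧ ((S = {i0} ∧ W = i0) ∨ (W ≠ i0 ∧ W ∈ S ∧ Reach (Mv G A c) i0 (S.erase W) ∧
    ∃ j ∈ S.erase W, Mv G A c W j))

lemma Q.reach {W i0 : ℕ} (h : Q G A c S W i0) : Reach (Mv G A c) i0 S := by
  rcases h.2 with ⟨h1, _⟩ | ⟨_, h2, h3, j, h4, h5⟩
  · rw [h1]; exact .base
  · have := Reach.step (S.erase W) W j h3 (by simp) h4 h5
    rwa [insert_erase h2] at this

lemma Q.W_mem {W i0 : ℕ} (h : Q G A c S W i0) : W ∈ S := by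
  rcases h.2 with ⟨h1, h2⟩ | ⟨_, h2, _⟩
  · rw [h1, h2]; simp
  · exact h2

lemma Q.insert {W i0 : ℕ} {y : V} (h : Q G A c S W i0) (hy : y ∉ A)
    (hn : ∀ w ∈ A, c w = W → ¬ G.Adj y w) : Q G (insert y A) (Function.update c y W) S W i0 := by
  have hupd : ∀ w ∈ A, Function.update c y W w = c w := fun w hw =>
    Function.update_of_ne (by rintro rfl; exact hy hw) _ _
  have hmv : ∀ i, ∀ j ∈ S.erase W, Mv G A c i j → Mv G (Insert.insert y A) (Function.update c y W) i j := by
    rintro i j hj ⟨v, hv, h1, h2⟩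
    refine ⟨v, mem_insert_of_mem hv, by rw [hupd v hv, h1], ?_⟩
    intro w hw hwj
    rcases mem_insert.1 hw with rfl | hw
    · rw [Function.update_self] at hwj
      exact absurd hwj.symm (ne_of_mem_erase hj)
    · rw [hupd w hw] at hwj
      exact h2 w hw hwj
  refine ⟨⟨?_, ?_⟩, ?_⟩
  · intro v hv
    rcases mem_insert.1 hv with rfl | hv
    · rw [Function.update_self]; exact h.W_mem
    · rw [hupd v hv]; exact h.1.1 v hv
  · intro u hu v hv huv
    rcases mem_insert.1 hu with rfl | hu'
    · rcases mem_insert.1 hv with rfl | hv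
      · exact absurd rfl huv.ne
      · rw [hupd v hv, Function.update_self]
        exact fun hh => hn v hv hh.symm huv
    · rcases mem_insert.1 hv with rfl | hv
      · rw [hupd u hu', Function.update_self]
        exact fun hh => hn u hu' hh huv.symm
      · rw [hupd v hv, hupd u hu']
        exact h.1.2 u hu' v hv huv
  · rcases h.2 with h1 | ⟨h1, h2, h3, j, h4, h5⟩
    · exact Or.inl h1
    · exact Or.inr ⟨h1, h2, h3.mono fun i _ j hj hh => hmv i j hj hh, j, h4, hmv W j h4 h5⟩

lemma Q.erase {W i0 : ℕ} {z : V} (h : Q G A c S W i0) (hzW : c z = W)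
    (hz : ∀ j ∈ S.erase W, ∃ w ∈ A, c w = j ∧ G.Adj z w) : Q G (A.erase z) c S W i0 := by
  refine ⟨⟨fun v hv => h.1.1 v (mem_of_mem_erase hv), fun u hu v hv =>
    h.1.2 u (mem_of_mem_erase hu) v (mem_of_mem_erase hv)⟩, ?_⟩
  have hmv : ∀ i, ∀ j ∈ S.erase W, Mv G A c i j → Mv G (A.erase z) c i j := by
    rintro i j hj ⟨v, hv, h1, h2⟩
    refine ⟨v, mem_erase.2 ⟨?_, hv⟩, h1, fun w hw => h2 w (mem_of_mem_erase hw)⟩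
    rintro rfl
    obtain ⟨w, hw, h3, h4⟩ := hz j hj
    exact h2 w hw h3 h4
  rcases h.2 with h1 | ⟨h1, h2, h3, j, h4, h5⟩
  · exact Or.inl h1
  · exact Or.inr ⟨h1, h2, h3.mono fun i _ j hj hh => hmv i j hj hh, j, h4, hmv W j h4 h5⟩

end
/-- the numerical inequality behind the discharging argument -/
lemma numeric (q t a d p C E : ℤ) (hq : 1 ≤ q) (hp0 : 0 ≤ p) (hpt : p ≤ t) (hd : 0 ≤ d)
    (hp : t - q - a + 1 + d ≤ p) (hdq : d ≤ q - 1 + a) (hE : E = q + t + 1 - a)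
    (hE1 : p < t → 1 ≤ E) (hC1 : 0 < p → 1 ≤ C) (hCd : C ≤ d + 1) (hCq : C ≤ q + 1 - a)
    (hCa : 1 ≤ a → C ≤ d) :
    (t : ℝ) ≤ p * ((q : ℝ) / C) + (t - p) * (2 * ((q : ℝ) / E)) := by
  have hqR : (1 : ℝ) ≤ q := by exact_mod_cast hq
  have hp0R : (0 : ℝ) ≤ p := by exact_mod_cast hp0
  have hptR : (0 : ℝ) ≤ t - p := by
    have : (p : ℝ) ≤ t := by exact_mod_cast hpt
    linarith
  -- the solo contribution is at least one per class
  have hal : ∀ _ : 0 < p, (1 : ℝ) ≤ q / C := by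
    intro h
    have h1 : (1 : ℝ) ≤ C := by exact_mod_cast hC1 h
    have h2 : C ≤ q := by
      rcases le_or_gt a 0 with h | h <;> omega
    have h3 : (C : ℝ) ≤ q := by exact_mod_cast h2
    rw [le_div_iff₀ (by linarith)]
    linarith
  rcases le_or_gt E (2 * q) with hE2 | hE2
  · -- poor
    have e1 : (p : ℝ) ≤ p * ((q : ℝ) / C) := by
      rcases hp0.eq_or_lt with h | h
      · rw [← h]; simp
      · nlinarith [hal h]
    have e2 : (t : ℝ) - p ≤ (t - p) * (2 * ((q : ℝ) / E)) := by
      rcases hpt.eq_or_lt with h | h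
      · rw [h]; simp
      · have h1 : (1 : ℝ) ≤ E := by exact_mod_cast hE1 h
        have h2 : (E : ℝ) ≤ 2 * q := by exact_mod_cast hE2
        have : (1 : ℝ) ≤ 2 * ((q : ℝ) / E) := by
          rw [← mul_div_assoc, le_div_iff₀ (by linarith)]
          linarith
        nlinarith
    linarith
  · -- rich
    obtain ⟨x, hx⟩ : ∃ x : ℤ, x = t - q - a + 1 := ⟨_, rfl⟩
    have hx1 : 1 ≤ x := by omega
    have hppos : 0 < p := by omega
    have hC := hC1 hppos
    have hCR : (1 : ℝ) ≤ C := by exact_mod_cast hC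
    have hxR : (1 : ℝ) ≤ x := by exact_mod_cast hx1
    have hEx : (E : ℝ) = 2 * q + x := by
      have : E = 2 * q + x := by omega
      exact_mod_cast this
    have hdR : (0 : ℝ) ≤ d := by exact_mod_cast hd
    have htR : (t : ℝ) = x + q + a - 1 := by
      have : t = x + q + a - 1 := by omega
      exact_mod_cast this
    have hpR : (x : ℝ) + d ≤ p := by
      have : x + d ≤ p := by omega
      exact_mod_cast this
    have hal := hal hppos
    have hbe0 : (0 : ℝ) ≤ 2 * ((q : ℝ) / E) := by rw [hEx]; positivity
    have hbe1 : 2 * ((q : ℝ) / E) ≤ 1 := by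
      rw [hEx, ← mul_div_assoc, div_le_one (by positivity)]
      linarith
    have hbe : 2 * ((q : ℝ) / E) = 2 * q / (2 * q + x) := by rw [hEx]; ring
    set be := 2 * ((q : ℝ) / E)
    set al := (q : ℝ) / C with hal_def
    have halC : al * C = q := by rw [hal_def]; field_simp
    have hdqR : (d : ℝ) ≤ q - 1 + a := by exact_mod_cast hdq
    -- reduce to the minimum number of solo classes
    have red : ∀ P : ℝ, P ≤ p → P * al + (t - P) * be ≤ p * al + (t - p) * be := by
      intro P hP
      nlinarith [mul_nonneg (sub_nonneg.2 hP) (sub_nonneg.2 (hbe1.trans hal))]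
    rcases le_or_gt a 0 with ha | ha
    · have haR : (a : ℝ) ≤ 0 := by exact_mod_cast ha
      have hCdR : (C : ℝ) ≤ d + 1 := by exact_mod_cast hCd
      refine le_trans ?_ (red _ hpR)
      have h1 : (q : ℝ) ≤ (d + 1) * al := by nlinarith
      have h2 : (x : ℝ) - 1 ≤ (x - 1) * al := by nlinarith
      have h3 : 0 ≤ (t - (x + d)) * be := by
        apply mul_nonneg _ hbe0
        linarith
      nlinarith
    · have haR : (1 : ℝ) ≤ a := by exact_mod_cast ha
      have hCdR : (C : ℝ) ≤ d := by exact_mod_cast hCa ha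
      have hCqR : (C : ℝ) ≤ q + 1 - a := by exact_mod_cast hCq
      refine le_trans ?_ (red (x + C) (by linarith))
      -- x * al + q + (t - x - C) * be
      have hb : 0 ≤ (a : ℝ) - 1 := by linarith
      have h1 : (x : ℝ) + x * (a - 1) / q ≤ x * al := by
        have : 1 + ((a : ℝ) - 1) / q ≤ al := by
          rw [hal_def, le_div_iff₀ (by linarith)]
          have h5 : ((a : ℝ) - 1) / q * C ≤ a - 1 := by
            have : ((a : ℝ) - 1) / q * C = (a - 1) * (C / q) := by ring
            rw [this]
            apply mul_le_of_le_one_right hb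
            rw [div_le_one (by linarith)]
            linarith
          nlinarith
        have := mul_le_mul_of_nonneg_left this (by linarith : (0 : ℝ) ≤ x)
        calc (x : ℝ) + x * (a - 1) / q = x * (1 + (a - 1) / q) := by ring
          _ ≤ _ := this
      have h2 : 2 * ((a : ℝ) - 1) * be ≤ (t - (x + C)) * be := by
        apply mul_le_mul_of_nonneg_right _ hbe0
        linarith
      have h3 : 1 ≤ (x : ℝ) / q + 2 * be := by
        rw [hbe]
        rcases le_total (q : ℝ) x with h | h
        · have : 1 ≤ (x : ℝ) / q := by rw [le_div_iff₀ (by linarith)]; linarith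
          have : 0 ≤ 2 * (q : ℝ) / (2 * q + x) := by positivity
          linarith
        · have : 2 / 3 ≤ 2 * (q : ℝ) / (2 * q + x) := by
            rw [div_le_div_iff₀ (by norm_num) (by positivity)]
            linarith
          have : 0 ≤ (x : ℝ) / q := by positivity
          linarith
      have h4 : (a : ℝ) - 1 ≤ x * (a - 1) / q + 2 * (a - 1) * be := by
        have := mul_le_mul_of_nonneg_left h3 hb
        calc (a : ℝ) - 1 = (a - 1) * 1 := by ring
          _ ≤ _ := this
          _ = _ := by ring
      have h5 : (C : ℝ) * al = q := by rw [mul_comm]; exact halC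
      nlinarith

section
variable {V : Type*} {G : SimpleGraph V} {X : Finset V} {K S : Finset ℕ} {c : V → ℕ} {s i0 i1 : ℕ}

/-- equitable colouring with class size `s` -/
def EqCol (G : SimpleGraph V) (X : Finset V) (K : Finset ℕ) (s : ℕ) (c : V → ℕ) : Prop :=
  Col G X K c ∧ ∀ i ∈ K, sz X c i = s

/-- Ore condition on `X` for `k` colours -/
def Ore (G : SimpleGraph V) (X : Finset V) (k : ℕ) : Prop :=
  ∀ u ∈ X, ∀ v ∈ X, G.Adj u v → dg G X u + dg G X v + 1 ≤ 2 * k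

/-- nearly equitable colouring with an accessible family `S` -/
structure St (G : SimpleGraph V) (X : Finset V) (K : Finset ℕ) (s : ℕ) (c : V → ℕ) (S : Finset ℕ)
    (i0 i1 : ℕ) : Prop where
  col : Col G X K c
  sub : S ⊆ K
  reach : Reach (Mv G X c) i0 S
  mem1 : i1 ∈ K
  size : ∀ i ∈ K, sz X c i + (if i = i0 then 1 else 0) = s + (if i = i1 then 1 else 0)

lemma St.done (h : St G X K s c S i0 i1) (h1 : i1 ∈ S) : ∃ c', EqCol G X K s c' := by
  obtain ⟨c', e1, _, _, _, e5⟩ := shift h.col h.reach h.sub i1 h1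
  refine ⟨c', e1, fun i hi => ?_⟩
  have := e5 i
  have := h.size i hi
  omega

/-- the working context -/
structure Ctx (G : SimpleGraph V) (X : Finset V) (K : Finset ℕ) (s : ℕ) (c : V → ℕ) (S : Finset ℕ)
    (i0 i1 : ℕ) : Prop extends St G X K s c S i0 i1 where
  notMem : i1 ∉ S
  ore : Ore G X K.card
  ih : ∀ X' : Finset V, X'.card = (K \ S).card * s → Ore G X' (K \ S).card →
    ∃ c', EqCol G X' (K \ S) s c'
  full : ∀ y ∈ X, c y ∉ S → ∀ j ∈ S, ∃ w ∈ X, c w = j ∧ G.Adj y w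

noncomputable abbrev Ain (X : Finset V) (c : V → ℕ) (S : Finset ℕ) : Finset V := X.filter (fun v => c v ∈ S)
noncomputable abbrev Bout (X : Finset V) (c : V → ℕ) (S : Finset ℕ) : Finset V := X.filter (fun v => c v ∉ S)

lemma AB_disj : Disjoint (Ain X c S) (Bout X c S) := disjoint_filter_filter_not _ _ _
lemma AB_union : Ain X c S ∪ Bout X c S = X := filter_union_filter_not_eq _ _

lemma dg_AB (v : V) : dg G (Ain X c S) v + dg G (Bout X c S) v = dg G X v := by
  rw [← dg_union AB_disj, AB_union]

lemma szA {i : ℕ} (hi : i ∈ S) : sz (Ain X c S) c i = sz X c i := by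
  unfold sz
  congr 1
  ext v
  simp only [mem_filter]
  constructor
  · rintro ⟨⟨h1, _⟩, h2⟩; exact ⟨h1, h2⟩
  · rintro ⟨h1, h2⟩; exact ⟨⟨h1, h2 ▸ hi⟩, h2⟩

lemma szB {i : ℕ} (hi : i ∉ S) : sz (Bout X c S) c i = sz X c i := by
  unfold sz
  congr 1
  ext v
  simp only [mem_filter]
  constructor
  · rintro ⟨⟨h1, _⟩, h2⟩; exact ⟨h1, h2⟩
  · rintro ⟨h1, h2⟩; exact ⟨⟨h1, h2 ▸ hi⟩, h2⟩

lemma mvA {i j : ℕ} (hi : i ∈ S) : Mv G X c i j → Mv G (Ain X c S) c i j := by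
  rintro ⟨v, hv, h1, h2⟩
  exact ⟨v, mem_filter.2 ⟨hv, h1 ▸ hi⟩, h1, fun w hw => h2 w (mem_filter.1 hw).1⟩

lemma St.colA (h : St G X K s c S i0 i1) : Col G (Ain X c S) S c :=
  ⟨fun _ hv => (mem_filter.1 hv).2, fun u hu v hv => h.col.2 u (mem_filter.1 hu).1 v (mem_filter.1 hv).1⟩

lemma Ctx.size_A (h : Ctx G X K s c S i0 i1) {i : ℕ} (hi : i ∈ S) :
    sz (Ain X c S) c i + (if i = i0 then 1 else 0) = s := by
  rw [szA hi, h.size i (h.sub hi), if_neg (by rintro rfl; exact h.notMem hi)]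
  rfl

lemma Ctx.card_B (h : Ctx G X K s c S i0 i1) : (Bout X c S).card = (K \ S).card * s + 1 := by
  have h1 : (Bout X c S).card = ∑ i ∈ K \ S, sz (Bout X c S) c i := by
    apply card_eq_sum_sz
    intro v hv
    obtain ⟨h2, h3⟩ := mem_filter.1 hv
    exact mem_sdiff.2 ⟨h.col.1 v h2, h3⟩
  have h2 : ∀ i ∈ K \ S, sz (Bout X c S) c i = s + if i = i1 then 1 else 0 := by
    intro i hi
    obtain ⟨h2, h3⟩ := mem_sdiff.1 hi
    have := h.size i h2
    rw [if_neg (by rintro rfl; exact h3 h.reach.mem)] at this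
    rw [szB h3]
    exact this
  rw [h1, sum_congr rfl h2, sum_add_distrib, sum_const, smul_eq_mul, sum_ite_eq' ,
    if_pos (mem_sdiff.2 ⟨h.mem1, h.notMem⟩)]

lemma Ctx.card_K (h : Ctx G X K s c S i0 i1) : K.card = S.card + (K \ S).card := by
  rw [card_sdiff_of_subset h.sub]
  have := card_le_card h.sub
  omega

lemma Ctx.q_pos (h : Ctx G X K s c S i0 i1) : 1 ≤ (K \ S).card :=
  card_pos.2 ⟨i1, mem_sdiff.2 ⟨h.mem1, h.notMem⟩⟩

lemma Ctx.degA (h : Ctx G X K s c S i0 i1) {y : V} (hy : y ∈ Bout X c S) :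
    S.card ≤ dg G (Ain X c S) y := by
  apply card_le_dg (c := c)
  intro j hj
  obtain ⟨h1, h2⟩ := mem_filter.1 hy
  obtain ⟨w, hw, h3, h4⟩ := h.full y h1 h2 j hj
  exact ⟨w, mem_filter.2 ⟨hw, h3 ▸ hj⟩, h3, h4⟩

lemma Ctx.degB (h : Ctx G X K s c S i0 i1) {y : V} (hy : y ∈ Bout X c S) :
    S.card + dg G (Bout X c S) y ≤ dg G X y := by
  have := h.degA hy
  have := dg_AB (G := G) (X := X) (c := c) (S := S) y
  omega

lemma Ctx.finish (h : Ctx G X K s c S i0 i1) {A B : Finset V} {cA : V → ℕ} (hd : Disjoint A B)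
    (hAB : A ∪ B = X) (hA : EqCol G A S s cA) (hB : B.card = (K \ S).card * s) (hO : Ore G B (K \ S).card) :
    ∃ c', EqCol G X K s c' := by
  obtain ⟨cB, hcB, hsB⟩ := h.ih B hB hO
  obtain ⟨h1, h2, h3⟩ := glue hd h.sub hA.1 hcB
  rw [hAB] at h1 h2 h3
  refine ⟨_, h1, fun i hi => ?_⟩
  by_cases hiS : i ∈ S
  · rw [h2 i hiS, hA.2 i hiS]
  · rw [h3 i (mem_sdiff.2 ⟨hi, hiS⟩), hsB i (mem_sdiff.2 ⟨hi, hiS⟩)]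

lemma Ctx.ore_B (h : Ctx G X K s c S i0 i1) {B : Finset V} (hB : B ⊆ Bout X c S) :
    Ore G B (K \ S).card := by
  intro u hu v hv huv
  have h1 := h.degB (hB hu)
  have h2 := h.degB (hB hv)
  have h3 := h.ore u (mem_filter.1 (hB hu)).1 v (mem_filter.1 (hB hv)).1 huv
  have h4 := dg_mono (G := G) hB u
  have h5 := dg_mono (G := G) hB v
  have := h.card_K
  omega

/-- a movable solo vertex gives an equitable colouring -/
lemma Ctx.movable (h : Ctx G X K s c S i0 i1) {W X0 : ℕ} {y z : V} (hW : W ∈ S)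
    (hR : Reach (Mv G X c) i0 (S.erase W)) (hz : z ∈ X) (hzW : c z = W) (hy : y ∈ Bout X c S)
    (hsolo : ∀ w ∈ X, c w = W → G.Adj y w → w = z)
    (hX0 : X0 ∈ S.erase W) (hmv : ∀ w ∈ X, c w = X0 → ¬ G.Adj z w) : ∃ c', EqCol G X K s c' := by
  have hzA : z ∈ Ain X c S := mem_filter.2 ⟨hz, hzW ▸ hW⟩
  have hyA : y ∉ Ain X c S := fun hh => (mem_filter.1 hy).2 (mem_filter.1 hh).2
  have hyX : y ∈ X := (mem_filter.1 hy).1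
  have hyz : z ≠ y := by rintro rfl; exact hyA hzA
  have hR' : Reach (Mv G (Ain X c S) c) i0 (S.erase W) :=
    hR.mono fun i hi j _ => mvA (mem_of_mem_erase hi)
  obtain ⟨c', e1, e2, e3, e4, e5⟩ := shift h.colA hR' (erase_subset _ _) X0 hX0
  have hX0W : X0 ≠ W := ne_of_mem_erase hX0
  have hW' : ∀ w ∈ Ain X c S, c' w = W → c w = W := by
    intro w hw hcw
    by_cases hh : c w ∈ S.erase W
    · have := e3 w hw hh
      rw [hcw] at this
      simp at this
    · rw [← e2 w hh]; exact hcw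
  have hc'z : c' z = W := by rw [e2 z (by rw [hzW]; simp), hzW]

  set c1 := Function.update c' z X0 with hc1
  have hcol1 : Col G (Ain X c S) S c1 := by
    refine ⟨?_, ?_⟩
    · intro v hv
      by_cases hvz : v = z
      · subst hvz; rw [hc1, Function.update_self]; exact mem_of_mem_erase hX0
      · rw [hc1, Function.update_of_ne hvz]; exact e1.1 v hv
    · intro u hu v hv huv
      by_cases huz : u = z
      · subst huz
        rw [hc1, Function.update_self, Function.update_of_ne huv.ne']
        intro hh
        exact hmv v (mem_filter.1 hv).1 (e4 v hv hh.symm) huv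
      · by_cases hvz : v = z
        · subst hvz
          rw [hc1, Function.update_self, Function.update_of_ne huz]
          intro hh
          exact hmv u (mem_filter.1 hu).1 (e4 u hu hh) huv.symm
        · rw [hc1, Function.update_of_ne huz, Function.update_of_ne hvz]
          exact e1.2 u hu v hv huv
  have hyn : ∀ w ∈ Ain X c S, c1 w = W → ¬ G.Adj y w := by
    intro w hw hcw hadj
    by_cases hwz : w = z
    · subst hwz
      rw [hc1, Function.update_self] at hcw
      exact hX0W hcw
    · rw [hc1, Function.update_of_ne hwz] at hcw
      exact hwz (hsolo w (mem_filter.1 hw).1 (hW' w hw hcw) hadj)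
  have hupd : ∀ w ∈ Ain X c S, Function.update c1 y W w = c1 w := fun w hw =>
    Function.update_of_ne (by rintro rfl; exact hyA hw) _ _
  have hcol2 : Col G (insert y (Ain X c S)) S (Function.update c1 y W) := by
    refine ⟨?_, ?_⟩
    · intro v hv
      rcases mem_insert.1 hv with rfl | hv
      · rw [Function.update_self]; exact hW
      · rw [hupd v hv]; exact hcol1.1 v hv
    · intro u hu v hv huv
      rcases mem_insert.1 hu with rfl | hu'
      · rcases mem_insert.1 hv with rfl | hv'
        · exact absurd rfl huv.ne
        · rw [hupd v hv', Function.update_self]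
          exact fun hh => hyn v hv' hh.symm huv
      · rcases mem_insert.1 hv with rfl | hv'
        · rw [hupd u hu', Function.update_self]
          exact fun hh => hyn u hu' hh huv.symm
        · rw [hupd v hv', hupd u hu']
          exact hcol1.2 u hu' v hv' huv
  refine h.finish (A := insert y (Ain X c S)) (B := (Bout X c S).erase y) ?_ ?_ ⟨hcol2, ?_⟩ ?_
    (h.ore_B (erase_subset _ _))
  · rw [disjoint_left]
    intro v hv hv'
    obtain ⟨h1, h2⟩ := mem_erase.1 hv'
    rcases mem_insert.1 hv with h3 | h3
    · exact h1 h3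
    · exact disjoint_left.1 AB_disj h3 h2
  · rw [insert_union, ← union_insert, insert_erase hy, AB_union]
  · intro i hi
    rw [sz_insert hyA]
    have f1 := sz_update (c := c') hzA X0 i
    rw [← hc1, hc'z] at f1
    have f2 := e5 i
    have f3 := h.size_A hi
    omega
  · rw [card_erase_of_mem hy, h.card_B]; simp

lemma Ctx.mkQ (h : Ctx G X K s c S i0 i1) {W : ℕ} (hW : W ∈ S)
    (hT : (S = {i0} ∧ W = i0) ∨ (W ≠ i0 ∧ Reach (Mv G X c) i0 (S.erase W))) :
    Q G (Ain X c S) c S W i0 := by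
  refine ⟨h.colA, ?_⟩
  rcases hT with hT | ⟨h1, h2⟩
  · exact Or.inl hT
  · refine Or.inr ⟨h1, hW, h2.mono fun i hi j _ => mvA (mem_of_mem_erase hi), ?_⟩
    obtain ⟨W', g1, g2, j, g3, g4⟩ := h.reach.cross (S.erase W) h2.mem (fun hh => by simpa using hh hW)
    have : W' = W := by
      by_contra hne
      exact g2 (mem_erase.2 ⟨hne, g1⟩)
    subst this
    exact ⟨j, g3, mvA hW g4⟩

/-- a solo vertex that is not movable -/
structure Fix (G : SimpleGraph V) (X : Finset V) (c : V → ℕ) (S : Finset ℕ) (W i0 : ℕ) (z : V) : Prop where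
  q : Q G (Ain X c S) c S W i0
  hz : z ∈ Ain X c S
  hzW : c z = W
  nonmov : ∀ j ∈ S.erase W, ∃ w ∈ Ain X c S, c w = j ∧ G.Adj z w

/-- `y` is a solo neighbour of `z` -/
structure Solo (G : SimpleGraph V) (X : Finset V) (c : V → ℕ) (S : Finset ℕ) (W : ℕ) (z y : V) : Prop where
  hy : y ∈ Bout X c S
  adj : G.Adj z y
  uniq : ∀ w ∈ X, c w = W → G.Adj y w → w = z

lemma Fix.deg {W : ℕ} {z : V} (f : Fix G X c S W i0 z) : S.card ≤ dg G (Ain X c S) z + 1 := by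
  have := card_le_dg (c := c) f.nonmov
  rw [card_erase_of_mem f.q.W_mem] at this
  omega

lemma Fix.notB {W : ℕ} {z : V} (f : Fix G X c S W i0 z) : z ∉ Bout X c S :=
  fun hh => disjoint_left.1 AB_disj f.hz hh

lemma Solo.notA {W : ℕ} {z y : V} (f : Solo G X c S W z y) : y ∉ Ain X c S :=
  fun hh => disjoint_left.1 AB_disj hh f.hy

lemma Col.insert {B : Finset V} {z : V} {j : ℕ} (h : Col G B K c) (hz : z ∉ B) (hj : j ∈ K)
    (hn : ∀ w ∈ B, c w = j → ¬ G.Adj z w) : Col G (insert z B) K (Function.update c z j) := by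
  have hupd : ∀ w ∈ B, Function.update c z j w = c w := fun w hw =>
    Function.update_of_ne (by rintro rfl; exact hz hw) _ _
  refine ⟨?_, ?_⟩
  · intro v hv
    rcases mem_insert.1 hv with rfl | hv
    · rw [Function.update_self]; exact hj
    · rw [hupd v hv]; exact h.1 v hv
  · intro u hu v hv huv
    rcases mem_insert.1 hu with rfl | hu'
    · rcases mem_insert.1 hv with rfl | hv'
      · exact absurd rfl huv.ne
      · rw [hupd v hv', Function.update_self]
        exact fun hh => hn v hv' hh.symm huv
    · rcases mem_insert.1 hv with rfl | hv'
      · rw [hupd u hu', Function.update_self]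
        exact fun hh => hn u hu' hh huv.symm
      · rw [hupd v hv', hupd u hu']
        exact h.2 u hu' v hv' huv

lemma Col.subset {A B : Finset V} (h : Col G B K c) (hA : A ⊆ B) : Col G A K c :=
  ⟨fun v hv => h.1 v (hA hv), fun u hu v hv => h.2 u (hA hu) v (hA hv)⟩

lemma Ctx.finish' (h : Ctx G X K s c S i0 i1) {A B : Finset V} {cA cB : V → ℕ} (hd : Disjoint A B)
    (hAB : A ∪ B = X) (hA : EqCol G A S s cA) (hB : EqCol G B (K \ S) s cB) :
    ∃ c', EqCol G X K s c' := by
  obtain ⟨h1, h2, h3⟩ := glue hd h.sub hA.1 hB.1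
  rw [hAB] at h1 h2 h3
  refine ⟨_, h1, fun i hi => ?_⟩
  by_cases hiS : i ∈ S
  · rw [h2 i hiS, hA.2 i hiS]
  · rw [h3 i (mem_sdiff.2 ⟨hi, hiS⟩), hB.2 i (mem_sdiff.2 ⟨hi, hiS⟩)]

lemma Ctx.nonadj (h : Ctx G X K s c S i0 i1) {W : ℕ} {z y1 y2 : V} (f : Fix G X c S W i0 z)
    (s1 : Solo G X c S W z y1) (s2 : Solo G X c S W z y2) (hne : y1 ≠ y2) (hna : ¬ G.Adj y1 y2)
    {cB : V → ℕ} (hcB : EqCol G ((Bout X c S).erase y1) (K \ S) s cB)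
    (huni : ∀ w ∈ (Bout X c S).erase y1, cB w = cB y2 → G.Adj z w → w = y2) :
    ∃ c', EqCol G X K s c' := by
  have hW := f.q.W_mem
  have q1 := (f.q.erase f.hzW f.nonmov).insert (y := y1) (fun hh => s1.notA (mem_of_mem_erase hh)) (by
    intro w hw hcw hadj
    exact (mem_erase.1 hw).1 (s1.uniq w (mem_filter.1 (mem_erase.1 hw).2).1 hcw hadj))
  have hy2 : y2 ∉ insert y1 ((Ain X c S).erase z) := by
    intro hh
    rcases mem_insert.1 hh with hh | hh
    · exact hne hh.symm
    · exact s2.notA (mem_of_mem_erase hh)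
  have q2 := q1.insert (y := y2) hy2 (by
    intro w hw hcw hadj
    rcases mem_insert.1 hw with hw | hw'
    · rw [hw] at hadj; exact hna hadj.symm
    · have hwy : w ≠ y1 := fun hh => s1.notA (hh ▸ mem_of_mem_erase hw')
      rw [Function.update_of_ne hwy] at hcw
      exact (mem_erase.1 hw').1 (s2.uniq w (mem_filter.1 (mem_erase.1 hw').2).1 hcw hadj))
  obtain ⟨c', e1, _, _, _, e5⟩ := shift q2.1 q2.reach (subset_refl S) W hW
  have hB2 : y2 ∈ (Bout X c S).erase y1 := mem_erase.2 ⟨hne.symm, s2.hy⟩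
  have hzB : z ∉ ((Bout X c S).erase y1).erase y2 := fun hh =>
    f.notB (mem_of_mem_erase (mem_of_mem_erase hh))
  have hcB2 : Col G (insert z (((Bout X c S).erase y1).erase y2)) (K \ S)
      (Function.update cB z (cB y2)) := by
    refine (hcB.1.subset (erase_subset _ _)).insert hzB (hcB.1.1 y2 hB2) ?_
    intro w hw hcw hadj
    exact (mem_erase.1 hw).1 (huni w (mem_erase.1 hw).2 hcw hadj)
  refine h.finish' (A := insert y2 (insert y1 ((Ain X c S).erase z)))
    (B := insert z (((Bout X c S).erase y1).erase y2)) ?_ ?_ ⟨e1, ?_⟩ ⟨hcB2, ?_⟩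
  · rw [disjoint_left]
    intro v hv hv'
    have n1 := s1.notA
    have n2 := s2.notA
    have n3 := f.notB
    have n4 := f.hz
    have n5 := s1.hy
    have n6 := s2.hy
    have n7 : v ∈ Ain X c S → v ∉ Bout X c S := fun hh => disjoint_left.1 AB_disj hh
    generalize Ain X c S = A at *
    generalize Bout X c S = B at *
    simp only [mem_insert, mem_erase] at hv hv'
    grind
  · conv_rhs => rw [← AB_union (X := X) (c := c) (S := S)]
    have n4 := f.hz
    have n5 := s1.hy
    have n6 := s2.hy
    generalize Ain X c S = A at *
    generalize Bout X c S = B at *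
    ext v
    simp only [mem_union, mem_insert, mem_erase]
    grind
  · intro i hi
    have f1 := e5 i
    rw [sz_insert hy2, sz_insert (fun hh => s1.notA (mem_of_mem_erase hh))] at f1
    have f2 := sz_erase (c := c) f.hz i
    rw [f.hzW] at f2
    have f3 := h.size_A hi
    omega
  · intro i hi
    rw [sz_insert hzB, sz_erase hB2, hcB.2 i hi]

/-- the set `B - y + z` has a nearly equitable colouring, or we are done -/
lemma Ctx.nearB (h : Ctx G X K s c S i0 i1) {W : ℕ} {z y : V} (f : Fix G X c S W i0 z)
    (s1 : Solo G X c S W z y) : (∃ c', EqCol G X K s c') ∨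
    ∃ cB, ∃ j ∈ K \ S, Col G (insert z ((Bout X c S).erase y)) (K \ S) cB ∧
      ∀ i ∈ K \ S, sz (insert z ((Bout X c S).erase y)) cB i = s + if i = j then 1 else 0 := by
  obtain ⟨cB, hcB, hsB⟩ := h.ih ((Bout X c S).erase y) (by rw [card_erase_of_mem s1.hy, h.card_B]; simp)
    (h.ore_B (erase_subset _ _))
  have hzB : z ∉ (Bout X c S).erase y := fun hh => f.notB (mem_of_mem_erase hh)
  set B1 := (Bout X c S).erase y with hB1
  by_cases hfree : ∃ j ∈ K \ S, ∀ w ∈ B1, cB w = j → ¬ G.Adj z w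
  · obtain ⟨j, hj, hjn⟩ := hfree
    refine Or.inr ⟨Function.update cB z j, j, hj, hcB.insert hzB hj hjn, fun i hi => ?_⟩
    rw [sz_insert hzB, hsB i hi]
  push Not at hfree
  have hzX := (mem_filter.1 f.hz).1
  have hyX := (mem_filter.1 s1.hy).1
  have d1 : (K \ S).card ≤ dg G B1 z := card_le_dg (c := cB) hfree
  have d2 := dg_erase (G := G) (v := z) s1.hy
  rw [if_pos s1.adj, ← hB1] at d2
  have d3 := dg_AB (G := G) (X := X) (c := c) (S := S) z
  have d4 := f.deg
  have d5 := h.card_K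
  have d6 := h.degB s1.hy
  have d7 := h.ore z hzX y hyX s1.adj
  -- a class with exactly one neighbour
  have hone : ∃ w ∈ B1, G.Adj z w ∧ ∀ w' ∈ B1, cB w' = cB w → G.Adj z w' → w' = w := by
    by_contra hcon
    push Not at hcon
    have h2 : (K \ S).card * 2 ≤ dg G B1 z := by
      have : dg G B1 z = ∑ i ∈ K \ S, ((B1.filter (fun w => G.Adj z w)).filter (fun w => cB w = i)).card :=
        card_eq_sum_card_fiberwise fun v hv => hcB.1 v (mem_filter.1 hv).1
      rw [this, ← smul_eq_mul]
      apply card_nsmul_le_sum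
      intro i hi
      obtain ⟨w, hw, hwi, hadj⟩ := hfree i hi
      obtain ⟨w', g1, g2, g3, g4⟩ := hcon w hw hadj
      have : 1 < ((B1.filter (fun w => G.Adj z w)).filter (fun w => cB w = i)).card :=
        one_lt_card.2 ⟨w', by simp [g1, g3, g2, hwi], w, by simp [hw, hadj, hwi], g4⟩
      exact this
    omega
  obtain ⟨w, hw, hzw, huni⟩ := hone
  have hwB : w ∈ Bout X c S := mem_of_mem_erase hw
  have hwy : w ≠ y := (mem_erase.1 hw).1
  have d8 := h.degB hwB
  have d9 := h.ore z hzX w (mem_filter.1 hwB).1 hzw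
  have hwK := hcB.1 w hw
  have hzw' : z ≠ w := hzw.ne
  by_cases hmove : ∃ j ∈ (K \ S).erase (cB w), ∀ w' ∈ B1, cB w' = j → ¬ G.Adj w w'
  · obtain ⟨j, hj, hjn⟩ := hmove
    obtain ⟨hjw, hjK⟩ := mem_erase.1 hj
    right
    have hzB2 : z ∉ B1.erase w := fun hh => hzB (mem_of_mem_erase hh)
    have c1 := (hcB.subset (erase_subset w B1)).insert hzB2 hwK (by
      intro u hu hcu hadj
      exact (mem_erase.1 hu).1 (huni u (mem_erase.1 hu).2 hcu hadj))
    have hwI : w ∉ insert z (B1.erase w) := by simp [hzw'.symm]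
    have c2 := c1.insert hwI hjK (by
      intro u hu hcu hadj
      rcases mem_insert.1 hu with hu' | hu'
      · subst hu'
        rw [Function.update_self] at hcu
        exact hjw hcu.symm
      · have : u ≠ z := fun hh => hzB2 (hh ▸ hu')
        rw [Function.update_of_ne this] at hcu
        exact hjn u (mem_erase.1 hu').2 hcu hadj)
    have hset : insert w (insert z (B1.erase w)) = insert z B1 := by
      ext v; simp only [mem_insert, mem_erase]; grind
    refine ⟨_, j, hjK, hset ▸ c2, fun i hi => ?_⟩
    rw [← hset, sz_insert hwI, sz_insert hzB2, sz_erase hw, hsB i hi]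
  · left
    push Not at hmove
    have d10 := card_le_dg (c := cB) (T := (K \ S).erase (cB w)) (X := B1) (v := w) hmove
    rw [card_erase_of_mem hwK] at d10
    have d11 := dg_erase (G := G) (v := w) s1.hy
    rw [← hB1] at d11
    have d12 := dg_AB (G := G) (X := X) (c := c) (S := S) w
    have hna : ¬ G.Adj w y := by
      intro hh
      rw [if_pos hh] at d11
      have := h.q_pos
      omega
    have d13 : dg G (Ain X c S) w ≤ S.card := by
      have := h.q_pos
      omega
    refine h.nonadj f s1 (y2 := w) ⟨hwB, hzw, ?_⟩ hwy.symm (fun hh => hna hh.symm) ⟨hcB, hsB⟩ huni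
    intro u hu hcu hadj
    by_contra hne
    have huA : u ∈ Ain X c S := mem_filter.2 ⟨hu, hcu ▸ f.q.W_mem⟩
    have d14 : S.card ≤ dg G ((Ain X c S).erase u) w := by
      apply card_le_dg (c := c)
      intro j hj
      by_cases hjW : j = W
      · exact ⟨z, mem_erase.2 ⟨Ne.symm hne, f.hz⟩, by rw [hjW, f.hzW], hzw.symm⟩
      · obtain ⟨x, hx, g1, g2⟩ := h.full w (mem_filter.1 hwB).1 (mem_filter.1 hwB).2 j hj
        refine ⟨x, mem_erase.2 ⟨?_, mem_filter.2 ⟨hx, g1 ▸ hj⟩⟩, g1, g2⟩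
        rintro rfl
        exact hjW (g1 ▸ hcu)
    have d15 := dg_erase (G := G) (v := w) huA
    rw [if_pos hadj] at d15
    omega

/-- the swap of `y` and `z` -/
lemma Ctx.swap (h : Ctx G X K s c S i0 i1) {W : ℕ} {z y : V} (f : Fix G X c S W i0 z)
    (s1 : Solo G X c S W z y) : (∃ c', EqCol G X K s c') ∨
    ∃ c' j, St G X K s c' S i0 j ∧ Ain X c' S = insert y ((Ain X c S).erase z) ∧
      Bout X c' S = insert z ((Bout X c S).erase y) := by
  rcases h.nearB f s1 with h1 | ⟨cB, j, hj, hcB, hsB⟩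
  · exact Or.inl h1
  right
  have hyA : y ∉ (Ain X c S).erase z := fun hh => s1.notA (mem_of_mem_erase hh)
  have q1 := (f.q.erase f.hzW f.nonmov).insert (y := y) hyA (by
    intro w hw hcw hadj
    exact (mem_erase.1 hw).1 (s1.uniq w (mem_filter.1 (mem_erase.1 hw).2).1 hcw hadj))
  have hd : Disjoint (insert y ((Ain X c S).erase z)) (insert z ((Bout X c S).erase y)) := by
    rw [disjoint_left]
    intro v hv hv'
    have n1 := s1.notA
    have n3 := f.notB
    have n4 := f.hz
    have n5 := s1.hy
    have n7 : v ∈ Ain X c S → v ∉ Bout X c S := fun hh => disjoint_left.1 AB_disj hh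
    generalize Ain X c S = A at *
    generalize Bout X c S = B at *
    simp only [mem_insert, mem_erase] at hv hv'
    grind
  have hU : insert y ((Ain X c S).erase z) ∪ insert z ((Bout X c S).erase y) = X := by
    conv_rhs => rw [← AB_union (X := X) (c := c) (S := S)]
    have n4 := f.hz
    have n5 := s1.hy
    generalize Ain X c S = A at *
    generalize Bout X c S = B at *
    ext v
    simp only [mem_union, mem_insert, mem_erase]
    grind
  obtain ⟨g1, g2, g3⟩ := glue hd h.sub q1.1 hcB
  rw [hU] at g1 g2 g3
  have hszA : ∀ i ∈ S, sz (insert y ((Ain X c S).erase z)) (Function.update c y W) i +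
      (if i = i0 then 1 else 0) = s := by
    intro i hi
    rw [sz_insert hyA]
    have f2 := sz_erase (c := c) f.hz i
    rw [f.hzW] at f2
    have f3 := h.size_A hi
    omega
  have hreach := q1.reach
  have hqcol := q1.1
  clear q1
  generalize insert y ((Ain X c S).erase z) = A' at *
  generalize insert z ((Bout X c S).erase y) = B' at *
  generalize Function.update c y W = cA at *
  have hAX : ∀ v ∈ A', v ∈ X := fun v hv => hU ▸ mem_union_left _ hv
  have hiff : ∀ v ∈ X, ((if v ∈ A' then cA v else cB v) ∈ S ↔ v ∈ A') := by
    intro v hv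
    split_ifs with hvA
    · simp [hvA, hqcol.1 v hvA]
    · have hvB : v ∈ B' := by
        rw [← hU] at hv
        exact (mem_union.1 hv).resolve_left hvA
      simp [hvA, (mem_sdiff.1 (hcB.1 v hvB)).2]
  refine ⟨fun v => if v ∈ A' then cA v else cB v, j, ⟨g1, h.sub, ?_, (mem_sdiff.1 hj).1, ?_⟩, ?_, ?_⟩
  · refine hreach.mono ?_
    rintro i hi l hl ⟨v, hv, e1, e2⟩
    refine ⟨v, hAX v hv, by simp [hv, e1], ?_⟩
    intro w hw hwl
    have hwA : w ∈ A' := (hiff w hw).1 (by dsimp only at hwl; rw [hwl]; exact hl)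
    exact e2 w hwA (by simpa [hwA] using hwl)
  · intro i hi
    by_cases hiS : i ∈ S
    · rw [g2 i hiS, hszA i hiS, if_neg (by rintro rfl; exact (mem_sdiff.1 hj).2 hiS)]
      rfl
    · have hiK : i ∈ K \ S := mem_sdiff.2 ⟨hi, hiS⟩
      rw [g3 i hiK, hsB i hiK, if_neg (c := i = i0) (by rintro rfl; exact hiS h.reach.mem)]
      rfl
  · ext v
    simp only [Ain, mem_filter]
    constructor
    · rintro ⟨h1, h2⟩; exact (hiff v h1).1 h2
    · intro h1; exact ⟨hAX v h1, (hiff v (hAX v h1)).2 h1⟩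
  · ext v
    simp only [Bout, mem_filter]
    constructor
    · rintro ⟨h1, h2⟩
      rw [hiff v h1] at h2
      rw [← hU] at h1
      exact (mem_union.1 h1).resolve_left h2
    · intro h1
      have hvX : v ∈ X := hU ▸ mem_union_right _ h1
      exact ⟨hvX, fun hh => disjoint_left.1 hd ((hiff v hvX).1 hh) h1⟩

end

section
variable {V : Type*} {G : SimpleGraph V} {X : Finset V} {K S : Finset ℕ} {c : V → ℕ} {s i0 i1 : ℕ}

lemma sum_dg_insert {C : Finset V} {z : V} (hz : z ∉ C) :
    ∑ v ∈ insert z C, dg G (insert z C) v = ∑ v ∈ C, dg G C v + 2 * dg G C z := by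
  have h1 : ∑ v ∈ C, (if G.Adj v z then 1 else 0) = dg G C z := by
    unfold dg
    rw [card_filter]
    apply sum_congr rfl
    intro v _
    simp only [G.adj_comm]
  rw [sum_insert hz, sum_congr rfl (fun v _ => dg_insert (G := G) (v := v) hz), sum_add_distrib, h1,
    dg_insert hz, if_neg (G.loopless.irrefl z)]
  omega

lemma sum_dg_swap {B : Finset V} {y z : V} (hy : y ∈ B) (hz : z ∉ B) (h : G.Adj z y) :
    ∑ v ∈ insert z (B.erase y), dg G (insert z (B.erase y)) v + 2 + 2 * dg G B y =
      ∑ v ∈ B, dg G B v + 2 * dg G B z := by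
  have h1 := sum_dg_insert (G := G) (C := B.erase y) (z := z) (fun hh => hz (mem_of_mem_erase hh))
  have h2 := sum_dg_insert (G := G) (C := B.erase y) (z := y) (by simp)
  rw [insert_erase hy] at h2
  have h3 := dg_erase (G := G) (v := z) hy
  have h4 := dg_erase (G := G) (v := y) hy
  rw [if_pos h] at h3
  rw [if_neg (G.loopless.irrefl y)] at h4
  omega

/-- the potential on colourings -/
noncomputable def pot (G : SimpleGraph V) (X : Finset V) (c : V → ℕ) (S : Finset ℕ) : ℕ :=
  (X.card + 1) * ∑ v ∈ Bout X c S, dg G (Bout X c S) v + ∑ v ∈ Ain X c S, dg G X v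

lemma dg_le_card (A : Finset V) (v : V) : dg G A v ≤ A.card := card_filter_le _ _

lemma sum_dg_le {A B : Finset V} (hA : A ⊆ X) (hB : B ⊆ X) : ∑ v ∈ A, dg G B v ≤ X.card * X.card := by
  calc ∑ v ∈ A, dg G B v ≤ ∑ v ∈ A, X.card :=
        sum_le_sum fun v _ => (dg_le_card B v).trans (card_le_card hB)
    _ = A.card * X.card := by rw [sum_const, smul_eq_mul]
    _ ≤ _ := Nat.mul_le_mul_right _ (card_le_card hA)

lemma pot_le : pot G X c S ≤ (X.card + 1) * (X.card * X.card) + X.card * X.card := by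
  unfold pot
  gcongr
  · exact sum_dg_le (filter_subset _ _) (filter_subset _ _)
  · exact sum_dg_le (filter_subset _ _) (subset_refl _)

lemma pot_swap {c' : V → ℕ} {y z : V} (hz : z ∈ Ain X c S) (hy : y ∈ Bout X c S) (hadj : G.Adj z y)
    (hA : Ain X c' S = insert y ((Ain X c S).erase z)) (hB : Bout X c' S = insert z ((Bout X c S).erase y))
    (hle : pot G X c' S ≤ pot G X c S) :
    dg G (Bout X c S) z ≤ dg G (Bout X c S) y + 1 ∧
      (dg G X z < dg G X y → dg G (Bout X c S) z ≤ dg G (Bout X c S) y) := by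
  have hzB : z ∉ Bout X c S := fun hh => disjoint_left.1 AB_disj hz hh
  have hyA : y ∉ Ain X c S := fun hh => disjoint_left.1 AB_disj hh hy
  unfold pot at hle
  rw [hA, hB] at hle
  have h1 := sum_dg_swap hy hzB hadj
  rw [sum_insert (fun hh => hyA (mem_of_mem_erase hh))] at hle
  have h2 := add_sum_erase (Ain X c S) (fun v => dg G X v) hz
  have h3 := dg_le_card (G := G) X z
  generalize ∑ v ∈ insert z ((Bout X c S).erase y), dg G (insert z ((Bout X c S).erase y)) v = E' at *
  generalize ∑ v ∈ Bout X c S, dg G (Bout X c S) v = E at *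
  generalize dg G (Bout X c S) z = a at *
  generalize dg G (Bout X c S) y = b at *
  generalize ∑ v ∈ (Ain X c S).erase z, dg G X v = F at *
  rw [← h2] at hle
  constructor
  · by_contra hcon
    have : E + 2 ≤ E' := by omega
    have := Nat.mul_le_mul_left (X.card + 1) this
    rw [mul_add] at this
    omega
  · intro hlt
    by_contra hcon
    have : E ≤ E' := by omega
    have := Nat.mul_le_mul_left (X.card + 1) this
    omega

lemma weight (h : Ctx G X K s c S i0 i1) {T : Finset ℕ} {U : ℕ} (hT : T ⊆ S)
    (hTU : ∀ W ∈ T, ∀ j ∈ S, j ∉ T → j ≠ U → ¬ Mv G X c W j)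
    (hsw : ∀ W ∈ T, ∀ z ∈ X, c z = W → ∀ y, Solo G X c S W z y → S.card ≤ dg G (Ain X c S) z + 1 ∧
      dg G (Bout X c S) z ≤ dg G (Bout X c S) y + 1 ∧
      (dg G X z < dg G X y → dg G (Bout X c S) z ≤ dg G (Bout X c S) y))
    {y : V} (hy : y ∈ Bout X c S) :
    (T.card : ℝ) ≤ ∑ z ∈ (X.filter (fun v => c v ∈ T)).filter (fun z => G.Adj y z),
      ((K \ S).card : ℝ) / (dg G (Bout X c S) z : ℝ) := by
  obtain ⟨hyX, hyS⟩ := mem_filter.1 hy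
  let N : ℕ → Finset V := fun W => X.filter (fun z => G.Adj y z ∧ c z = W)
  have hN1 : ∀ W ∈ S, 1 ≤ (N W).card := by
    intro W hW
    obtain ⟨w, h1, h2, h3⟩ := h.full y hyX hyS W hW
    exact card_pos.2 ⟨w, mem_filter.2 ⟨h1, h3, h2⟩⟩
  let P := T.filter (fun W => (N W).card = 1)
  have hsplit : ∑ z ∈ (X.filter (fun v => c v ∈ T)).filter (fun z => G.Adj y z),
      ((K \ S).card : ℝ) / (dg G (Bout X c S) z : ℝ) =
      ∑ W ∈ T, ∑ z ∈ N W, ((K \ S).card : ℝ) / (dg G (Bout X c S) z : ℝ) := by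
    rw [← sum_fiberwise_of_maps_to (s := (X.filter (fun v => c v ∈ T)).filter (fun z => G.Adj y z)) (t := T)
      (g := c) (fun z hz => (mem_filter.1 (mem_filter.1 hz).1).2)]
    apply sum_congr rfl
    intro W hW
    apply sum_congr _ (fun _ _ => rfl)
    ext z
    simp only [N, mem_filter]
    constructor
    · rintro ⟨⟨⟨h1, h2⟩, h3⟩, h4⟩; exact ⟨h1, h3, h4⟩
    · rintro ⟨h1, h3, h4⟩; exact ⟨⟨⟨h1, h4 ▸ hW⟩, h3⟩, h4⟩
  -- degree of y into A
  have hdA : S.card + (T.card - P.card) ≤ dg G (Ain X c S) y := by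
    have e1 : dg G (Ain X c S) y = ∑ W ∈ S, (N W).card := by
      unfold dg
      rw [card_eq_sum_card_fiberwise (f := c) (t := S)
        (s := (Ain X c S).filter (fun w => G.Adj y w)) (fun v hv => (mem_filter.1 (mem_filter.1 hv).1).2)]
      apply sum_congr rfl
      intro W hW
      congr 1
      ext z
      simp only [N, Ain, mem_filter]
      constructor
      · rintro ⟨⟨⟨h1, h2⟩, h3⟩, h4⟩; exact ⟨h1, h3, h4⟩
      · rintro ⟨h1, h3, h4⟩; exact ⟨⟨⟨h1, h4 ▸ hW⟩, h3⟩, h4⟩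
    have e2 : ∑ W ∈ S, (1 + if W ∈ T \ P then 1 else 0) ≤ ∑ W ∈ S, (N W).card := by
      apply sum_le_sum
      intro W hW
      have := hN1 W hW
      split_ifs with hh
      · obtain ⟨g1, g2⟩ := mem_sdiff.1 hh
        have : (N W).card ≠ 1 := fun h' => g2 (mem_filter.2 ⟨g1, h'⟩)
        omega
      · omega
    rw [sum_add_distrib, ← card_filter, filter_mem_eq_inter, inter_eq_right.2 (sdiff_subset.trans hT),
      card_sdiff_of_subset (show P ⊆ T from filter_subset _ _)] at e2
    simp only [sum_const, smul_eq_mul, mul_one] at e2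
    omega
  have hPT : P.card ≤ T.card := card_le_card (filter_subset _ _)
  have hK := h.card_K
  have hq := h.q_pos
  have hAB := dg_AB (G := G) (X := X) (c := c) (S := S) y
  set q : ℤ := ((K \ S).card : ℤ) with hqd
  set d : ℤ := (dg G (Bout X c S) y : ℤ) with hdd
  set a : ℤ := (dg G X y : ℤ) - (K.card - 1) with had
  set E : ℤ := q + T.card + 1 - a with hE
  set C : ℤ := min (if 1 ≤ a then d else d + 1) (q + 1 - a) with hC
  have hpos : ∀ z, G.Adj y z → 1 ≤ dg G (Bout X c S) z := fun z hz =>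
    card_pos.2 ⟨y, mem_filter.2 ⟨hy, hz.symm⟩⟩
  have hsolo : ∀ W ∈ P, ∀ z ∈ N W, (dg G (Bout X c S) z : ℤ) ≤ C := by
    intro W hW z hz
    obtain ⟨hWT, hW1⟩ := mem_filter.1 hW
    obtain ⟨hzX, hyz, hzW⟩ := mem_filter.1 hz
    obtain ⟨g1, g2, g3⟩ := hsw W hWT z hzX hzW y ⟨hy, hyz.symm, fun w hw hwW hyw =>
      card_le_one.1 hW1.le w (mem_filter.2 ⟨hw, hyw, hwW⟩) z hz⟩
    have g4 := h.ore z hzX y hyX hyz.symm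
    have g5 := dg_AB (G := G) (X := X) (c := c) (S := S) z
    rw [hC, le_min_iff]
    constructor
    · split_ifs with ha
      · have := g3 (by omega)
        omega
      · omega
    · omega
  have hany : ∀ W ∈ T, ∀ z ∈ N W, (dg G (Bout X c S) z : ℤ) ≤ E := by
    intro W hWT z hz
    obtain ⟨hzX, hyz, hzW⟩ := mem_filter.1 hz
    have g1 : ((S \ T).erase U).card ≤ dg G (Ain X c S) z := by
      apply card_le_dg (c := c)
      intro j hj
      simp only [mem_erase, mem_sdiff] at hj
      have := hTU W hWT j hj.2.1 hj.2.2 hj.1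
      unfold Mv at this
      push Not at this
      obtain ⟨w, e1, e2, e3⟩ := this z hzX hzW
      exact ⟨w, mem_filter.2 ⟨e1, e2 ▸ hj.2.1⟩, e2, e3⟩
    have g2 := pred_card_le_card_erase (s := S \ T) (a := U)
    rw [card_sdiff_of_subset hT] at g2
    have g4 := h.ore z hzX y hyX hyz.symm
    have g5 := dg_AB (G := G) (X := X) (c := c) (S := S) z
    omega
  have hdm := h.degB hy
  have hnum := numeric q T.card a d P.card C E (by omega) (by omega) (by omega) (by omega) (by omega)
    (by omega) rfl ?_ ?_ ?_ ?_ ?_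
  · rw [hsplit]
    simp only [Int.cast_natCast] at hnum
    refine le_trans hnum ?_
    rw [← sum_filter_add_sum_filter_not T (fun W => (N W).card = 1)]
    have hq0 : (0:ℝ) ≤ (q:ℝ) := by rw [hqd]; positivity
    have hqR : ((K \ S).card : ℝ) = (q : ℝ) := by rw [hqd]; norm_cast
    have hfr : ∀ z, G.Adj y z → ∀ D : ℤ, (dg G (Bout X c S) z : ℤ) ≤ D →
        (q:ℝ) / D ≤ ((K \ S).card : ℝ) / (dg G (Bout X c S) z : ℝ) := by
      intro z hz D hD
      rw [hqR]
      have := hpos z hz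
      apply div_le_div_of_nonneg_left hq0
      · exact_mod_cast this
      · exact_mod_cast hD
    apply add_le_add
    · rw [← nsmul_eq_mul]
      apply card_nsmul_le_sum
      intro W hW
      obtain ⟨z, hz⟩ := card_eq_one.1 (mem_filter.1 hW).2
      have hzN : z ∈ N W := by rw [hz]; simp
      rw [hz, sum_singleton]
      exact hfr z (mem_filter.1 hzN).2.1 C (hsolo W hW z hzN)
    · have hcard : ((T.card : ℝ) - P.card) = (T.filter (fun W => ¬ (N W).card = 1)).card := by
        have := card_filter_add_card_filter_not (s := T) (fun W => (N W).card = 1)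
        rw [← this]
        push_cast
        simp only [P]
        ring
      rw [hcard, ← nsmul_eq_mul]
      apply card_nsmul_le_sum
      intro W hW
      obtain ⟨hWT, hW1⟩ := mem_filter.1 hW
      have h2 : 2 ≤ (N W).card := by
        have := hN1 W (hT hWT)
        omega
      obtain ⟨z, hz⟩ := card_pos.1 (by omega : 0 < (N W).card)
      have hE0 : (0:ℝ) ≤ (q:ℝ) / E := by
        have := hany W hWT z hz
        have : (0:ℤ) ≤ E := by omega
        have : (0:ℝ) ≤ E := by exact_mod_cast this
        positivity
      calc 2 * ((q:ℝ) / E) ≤ (N W).card * ((q:ℝ) / E) := by gcongr; exact_mod_cast h2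
        _ ≤ _ := by
          rw [← nsmul_eq_mul]
          apply card_nsmul_le_sum
          intro z hz
          exact hfr z (mem_filter.1 hz).2.1 E (hany W hWT z hz)
  · intro hlt
    have : ∃ W ∈ T, W ∉ P := by
      by_contra hcon
      push Not at hcon
      have := card_le_card (show T ⊆ P from hcon)
      omega
    obtain ⟨W, hW, _⟩ := this
    obtain ⟨z, hz⟩ := card_pos.1 (hN1 W (hT hW))
    have := hany W hW z hz
    have := hpos z (mem_filter.1 hz).2.1
    omega
  · intro hlt
    obtain ⟨W, hW⟩ := card_pos.1 (show 0 < P.card by omega)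
    obtain ⟨z, hz⟩ := card_pos.1 (hN1 W (hT (mem_filter.1 hW).1))
    have := hsolo W hW z hz
    have := hpos z (mem_filter.1 hz).2.1
    omega
  · rw [hC]; split_ifs <;> omega
  · rw [hC]; exact min_le_right _ _
  · intro ha; rw [hC, if_pos ha]; exact min_le_left _ _

lemma counting (h : Ctx G X K s c S i0 i1) {T : Finset ℕ} {U : ℕ} (hT : T ⊆ S) (hne : T.Nonempty)
    (hTU : ∀ W ∈ T, ∀ j ∈ S, j ∉ T → j ≠ U → ¬ Mv G X c W j)
    (hsw : ∀ W ∈ T, ∀ z ∈ X, c z = W → ∀ y, Solo G X c S W z y → S.card ≤ dg G (Ain X c S) z + 1 ∧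
      dg G (Bout X c S) z ≤ dg G (Bout X c S) y + 1 ∧
      (dg G X z < dg G X y → dg G (Bout X c S) z ≤ dg G (Bout X c S) y)) : False := by
  set A' := X.filter (fun v => c v ∈ T) with hA'
  set f : V → ℝ := fun z => ((K \ S).card : ℝ) / (dg G (Bout X c S) z : ℝ) with hf
  have h1 : ((Bout X c S).card : ℝ) * T.card ≤ ∑ y ∈ Bout X c S, ∑ z ∈ A'.filter (fun z => G.Adj y z), f z := by
    rw [← nsmul_eq_mul]
    apply card_nsmul_le_sum
    intro y hy
    exact weight h hT hTU hsw hy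
  have h2 : ∑ y ∈ Bout X c S, ∑ z ∈ A'.filter (fun z => G.Adj y z), f z =
      ∑ z ∈ A', (dg G (Bout X c S) z : ℝ) * f z := by
    generalize Bout X c S = B at *
    rw [sum_congr rfl (fun y _ => sum_filter (s := A') (fun z => G.Adj y z) f), sum_comm]
    apply sum_congr rfl
    intro z hz
    have : (dg G B z : ℝ) * f z = ∑ y ∈ B.filter (fun y => G.Adj z y), f z := by
      rw [sum_const, nsmul_eq_mul]; rfl
    rw [this, sum_filter]
    apply sum_congr rfl
    intro y _
    simp only [G.adj_comm]
  have h3 : ∑ z ∈ A', (dg G (Bout X c S) z : ℝ) * f z ≤ A'.card * ((K \ S).card : ℝ) := by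
    rw [← nsmul_eq_mul]
    apply sum_le_card_nsmul
    intro z _
    simp only [hf]
    by_cases h0 : (dg G (Bout X c S) z : ℝ) = 0
    · rw [h0]; simp
    · rw [mul_div_cancel₀ _ h0]
  have h4 : A'.card ≤ T.card * s := by
    have : A'.card = ∑ i ∈ T, sz A' c i := card_eq_sum_sz (fun v hv => (mem_filter.1 hv).2)
    rw [this, ← smul_eq_mul]
    apply sum_le_card_nsmul
    intro i hi
    have g1 := h.size_A (hT hi)
    have g2 : sz A' c i ≤ sz X c i := card_le_card (filter_subset_filter _ (filter_subset _ _))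
    rw [szA (hT hi)] at g1
    omega
  have h5 := h.card_B
  have h6 : (Bout X c S).card * T.card ≤ A'.card * (K \ S).card := by
    have := h1.trans (h2 ▸ h3)
    exact_mod_cast this
  have h7 := Nat.mul_le_mul_right (K \ S).card h4
  have h8 := card_pos.2 hne
  rw [h5] at h6
  nlinarith

theorem improve (hO : Ore G X K.card)
    (ih : ∀ K' : Finset ℕ, K'.card < K.card → ∀ X' : Finset V, X'.card = K'.card * s → Ore G X' K'.card →
      ∃ c', EqCol G X' K' s c')
    (h0 : St G X K s c S i0 i1) : ∃ c', EqCol G X K s c' := by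
  by_contra hno
  set L := (X.card + 1) * (X.card * X.card) + X.card * X.card + 1 with hL
  let Z : Set ℕ := {m | ∃ c S i0 i1, St G X K s c S i0 i1 ∧ S.card * L + pot G X c S = m}
  have hZb : BddAbove Z := by
    refine ⟨K.card * L + L, ?_⟩
    rintro m ⟨c, S, i0, i1, h, rfl⟩
    have g1 := Nat.mul_le_mul_right L (card_le_card h.sub)
    have g2 := pot_le (G := G) (X := X) (c := c) (S := S)
    omega
  have hZn : Z.Nonempty := ⟨_, c, S, i0, i1, h0, rfl⟩
  obtain ⟨c, S, i0, i1, h, hm⟩ := Nat.sSup_mem hZn hZb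
  have hmax : ∀ c' S' i0' i1', St G X K s c' S' i0' i1' →
      S'.card * L + pot G X c' S' ≤ S.card * L + pot G X c S := by
    intro c' S' i0' i1' h'
    rw [hm]
    exact le_csSup hZb ⟨c', S', i0', i1', h', rfl⟩
  clear hm h0
  have hctx : Ctx G X K s c S i0 i1 := by
    refine { h with notMem := fun hh => hno (h.done hh), ore := hO, ih := ?_, full := ?_ }
    · refine ih (K \ S) ?_
      apply card_lt_card
      refine ⟨sdiff_subset, fun hh => ?_⟩
      exact (mem_sdiff.1 (hh (h.sub h.reach.mem))).2 h.reach.mem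
    · intro y hy hyS j hj
      by_contra hcon
      push Not at hcon
      have := hmax c (insert (c y) S) i0 i1 { h with
        sub := insert_subset (h.col.1 y hy) h.sub
        reach := .step S (c y) j h.reach hyS hj ⟨y, hy, rfl, hcon⟩ }
      rw [card_insert_of_notMem hyS, add_mul] at this
      have g2 := pot_le (G := G) (X := X) (c := c) (S := S)
      omega
  obtain ⟨T, U, hTS, hTne, hU, hterm, hTU⟩ := h.reach.terminal
  refine counting hctx hTS hTne hTU ?_
  intro W hW z hz hzW y hs
  have hzA : z ∈ Ain X c S := mem_filter.2 ⟨hz, hzW ▸ hTS hW⟩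
  have hfix : Fix G X c S W i0 z := by
    refine ⟨hctx.mkQ (hTS hW) (hterm W hW), hzA, hzW, ?_⟩
    intro j hj
    by_contra hcon
    push Not at hcon
    rcases hterm W hW with ⟨h1, h2⟩ | ⟨h1, h2⟩
    · rw [h1, h2] at hj; simp at hj
    · refine hno (hctx.movable (hTS hW) h2 hz hzW hs.hy hs.uniq hj ?_)
      intro w hw hwj
      exact hcon w (mem_filter.2 ⟨hw, hwj ▸ mem_of_mem_erase hj⟩) hwj
  refine ⟨hfix.deg, ?_⟩
  rcases hctx.swap hfix hs with h1 | ⟨c', j, h1, h2, h3⟩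
  · exact absurd h1 hno
  · have := hmax c' S i0 j h1
    exact pot_swap hzA hs.hy hs.adj h2 h3 (by omega)

end

section
variable {V : Type*}

lemma exists_split (s : ℕ) (K : Finset ℕ) : ∀ X : Finset V, X.card = K.card * s →
    ∃ c : V → ℕ, (∀ v ∈ X, c v ∈ K) ∧ ∀ i ∈ K, sz X c i = s := by
  induction K using Finset.induction_on with
  | empty =>
    intro X hX
    have : X = ∅ := by simpa using hX
    subst this
    exact ⟨fun _ => 0, by simp, by simp⟩
  | insert i K hi ih =>
    intro X hX
    rw [card_insert_of_notMem hi] at hX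
    obtain ⟨Y, hY, hYs⟩ := exists_subset_card_eq (s := X) (n := s) (by rw [hX]; nlinarith)
    obtain ⟨c, h1, h2⟩ := ih (X \ Y) (by
      rw [card_sdiff_of_subset hY, hX, hYs, add_mul, one_mul]; omega)
    refine ⟨fun v => if v ∈ Y then i else c v, ?_, ?_⟩
    · intro v hv
      dsimp only
      split_ifs with hvY
      · exact mem_insert_self _ _
      · exact mem_insert_of_mem (h1 v (mem_sdiff.2 ⟨hv, hvY⟩))
    · intro j hj
      by_cases hji : j = i
      · subst hji
        rw [← hYs]
        unfold sz
        congr 1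
        ext v
        simp only [mem_filter]
        constructor
        · rintro ⟨g1, g2⟩
          by_contra hvY
          rw [if_neg hvY] at g2
          exact hi (g2 ▸ h1 v (mem_sdiff.2 ⟨g1, hvY⟩))
        · intro hv
          exact ⟨hY hv, if_pos hv⟩
      · have hjK : j ∈ K := (mem_insert.1 hj).resolve_left hji
        rw [← h2 j hjK]
        unfold sz
        congr 1
        ext v
        simp only [mem_filter, mem_sdiff]
        constructor
        · rintro ⟨g1, g2⟩
          split_ifs at g2 with hvY
          · exact absurd g2.symm hji
          · exact ⟨⟨g1, hvY⟩, g2⟩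
        · rintro ⟨⟨g1, g2⟩, g3⟩
          exact ⟨g1, by rw [if_neg g2]; exact g3⟩

/-- delete all edges at `u` -/
def cut (G : SimpleGraph V) (u : V) : SimpleGraph V where
  Adj a b := G.Adj a b ∧ a ≠ u ∧ b ≠ u
  symm := ⟨fun _ _ h => ⟨h.1.symm, h.2.2, h.2.1⟩⟩
  loopless := ⟨fun a h => G.loopless.irrefl a h.1⟩

lemma dg_cut (G : SimpleGraph V) (u : V) (X : Finset V) (v : V) : dg (cut G u) X v ≤ dg G X v := by
  apply card_le_card
  intro w hw
  obtain ⟨h1, h2⟩ := mem_filter.1 hw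
  exact mem_filter.2 ⟨h1, h2.1⟩

theorem main_aux (s : ℕ) : ∀ (n : ℕ) (K : Finset ℕ), K.card = n → ∀ (m : ℕ) (G : SimpleGraph V) (X : Finset V),
    ∑ v ∈ X, dg G X v = m → X.card = K.card * s → Ore G X K.card → ∃ c, EqCol G X K s c := by
  intro n
  induction n using Nat.strong_induction_on with
  | _ n IH =>
  intro K hK m
  induction m using Nat.strong_induction_on with
  | _ m IH2 =>
  intro G X hm hX hO
  by_cases hE : ∃ u ∈ X, ∃ v ∈ X, G.Adj u v
  swap
  · push Not at hE
    obtain ⟨c, h1, h2⟩ := exists_split s K X hX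
    exact ⟨c, ⟨h1, fun u hu v hv huv => absurd huv (hE u hu v hv)⟩, h2⟩
  have hE' : ∃ u ∈ X, ∃ v ∈ X, G.Adj u v ∧ dg G X u < K.card := by
    obtain ⟨u, hu, v, hv, huv⟩ := hE
    have := hO u hu v hv huv
    by_cases h : dg G X u < K.card
    · exact ⟨u, hu, v, hv, huv, h⟩
    · exact ⟨v, hv, u, hu, huv.symm, by omega⟩
  obtain ⟨u, hu, v, hv, huv, hdeg⟩ := hE'
  obtain ⟨c, hc, hs⟩ := IH2 (∑ v ∈ X, dg (cut G u) X v) (by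
      rw [← hm]
      apply sum_lt_sum (fun v _ => dg_cut G u X v)
      refine ⟨u, hu, ?_⟩
      have h1 : dg (cut G u) X u = 0 := by
        unfold dg
        rw [card_eq_zero, filter_eq_empty_iff]
        intro w _ hw
        exact hw.2.1 rfl
      rw [h1]
      exact card_pos.2 ⟨v, mem_filter.2 ⟨hv, huv⟩⟩) (cut G u) X rfl hX (by
      intro a ha b hb hab
      have h1 := hO a ha b hb hab.1
      have h2 := dg_cut G u X a
      have h3 := dg_cut G u X b
      omega)
  have hfree : ∃ j ∈ K, ∀ w ∈ X, c w = j → ¬ G.Adj u w := by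
    by_contra hcon
    push Not at hcon
    have := card_le_dg (c := c) (G := G) (X := X) (v := u) hcon
    omega
  obtain ⟨j, hj, hjn⟩ := hfree
  have hcol : Col G X K (Function.update c u j) := by
    refine ⟨?_, ?_⟩
    · intro a ha
      by_cases hau : a = u
      · subst hau; rw [Function.update_self]; exact hj
      · rw [Function.update_of_ne hau]; exact hc.1 a ha
    · intro a ha b hb hab
      by_cases hau : a = u
      · subst hau
        rw [Function.update_self, Function.update_of_ne hab.ne']
        exact fun hh => hjn b hb hh.symm hab
      · by_cases hbu : b = u
        · subst hbu
          rw [Function.update_self, Function.update_of_ne hau]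
          exact fun hh => hjn a ha hh hab.symm
        · rw [Function.update_of_ne hau, Function.update_of_ne hbu]
          exact hc.2 a ha b hb ⟨hab, hau, hbu⟩
  have hSt : St G X K s (Function.update c u j) {c u} (c u) j := by
    refine ⟨hcol, by simpa using hc.1 u hu, .base, hj, ?_⟩
    intro i hi
    rw [sz_update hu, hs i hi]
  refine improve hO ?_ hSt
  intro K' hK' X' hX' hO'
  exact IH K'.card (by omega) K' rfl _ G X' rfl hX' hO'

end

theorem factor {V : Type*} [Fintype V] (G : SimpleGraph V) [DecidableRel G.Adj]
    (r : ℕ) (hr : 1 ≤ r) (hdvd : r ∣ Fintype.card V)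
    (hOre : ∀ x y : V, x ≠ y → ¬ G.Adj x y →
      2 * (1 - 1 / (r : ℝ)) * (Fintype.card V) - 1 ≤
        (G.degree x : ℝ) + (G.degree y : ℝ)) :
    ∃ 𝒯 : Finset (Finset V),
      (∀ S ∈ 𝒯, S.card = r ∧ G.IsClique (S : Set V)) ∧
      ((𝒯 : Set (Finset V)).Pairwise fun S T => Disjoint S T) ∧
      ∀ v : V, ∃ S ∈ 𝒯, v ∈ S := by
  obtain ⟨k, hk⟩ := hdvd
  have hdeg : ∀ x, dg Gᶜ univ x + G.degree x + 1 = Fintype.card V := by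
    intro x
    have h1 : dg Gᶜ univ x = Gᶜ.degree x := by
      unfold dg
      rw [← SimpleGraph.card_neighborFinset_eq_degree]
      congr 1
      ext w
      simp
    have h2 := G.degree_compl x
    have h3 := G.degree_lt_card_verts x
    omega
  have hO : Ore Gᶜ (univ : Finset V) (range k).card := by
    intro u _ v _ huv
    have huv' := (G.compl_adj u v).1 huv
    have h1 := hOre u v huv'.1 huv'.2
    have h2 := hdeg u
    have h3 := hdeg v
    have hr0 : (r : ℝ) ≠ 0 := by positivity
    have h4 : 2 * (1 - 1 / (r : ℝ)) * (Fintype.card V) = 2 * (Fintype.card V : ℝ) - 2 * k := by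
      rw [hk]; push_cast; field_simp
    rw [h4] at h1
    have h5 : 2 * Fintype.card V ≤ G.degree u + G.degree v + 1 + 2 * k := by
      have : (2 * (Fintype.card V : ℝ)) ≤ G.degree u + G.degree v + 1 + 2 * k := by linarith
      exact_mod_cast this
    rw [card_range]
    omega
  obtain ⟨c, hc, hs⟩ := main_aux r _ (range k) rfl _ Gᶜ univ rfl (by
    rw [card_univ, card_range, hk, mul_comm]) hO
  refine ⟨(range k).image (fun i => univ.filter (fun v => c v = i)), ?_, ?_, ?_⟩
  · intro S hS
    obtain ⟨i, hi, rfl⟩ := mem_image.1 hS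
    refine ⟨hs i hi, ?_⟩
    intro a ha b hb hab
    simp only [coe_filter, mem_univ, true_and, Set.mem_ofPred_eq] at ha hb
    by_contra hn
    exact hc.2 a (mem_univ _) b (mem_univ _) ((G.compl_adj a b).2 ⟨hab, hn⟩) (ha.trans hb.symm)
  · intro S hS T hT hne
    obtain ⟨i, hi, rfl⟩ := mem_image.1 (mem_coe.1 hS)
    obtain ⟨j, hj, rfl⟩ := mem_image.1 (mem_coe.1 hT)
    rw [disjoint_left]
    intro v hv hv'
    rw [(mem_filter.1 hv).2.symm, (mem_filter.1 hv').2.symm] at hne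
    exact hne rfl
  · intro v
    exact ⟨_, mem_image.2 ⟨c v, hc.1 v (mem_univ _), rfl⟩, by simp⟩

end KK

/-- **Theorem (Kierstead–Kostochka).** If `r ∣ n` and `d(x)+d(y) ≥ 2(1-1/r)n - 1` for
all distinct nonadjacent vertices of an `n`-vertex graph `G`, then `G` has a
`K_r`-factor: pairwise vertex-disjoint complete subgraphs on `r` vertices covering
every vertex. -/
theorem kierstead_kostochka {V : Type*} [Fintype V]
    (G : SimpleGraph V) [DecidableRel G.Adj]
    (r : ℕ) (hr : 1 ≤ r) (hdvd : r ∣ Fintype.card V)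
    (hOre : ∀ x y : V, x ≠ y → ¬ G.Adj x y →
      2 * (1 - 1 / (r : ℝ)) * (Fintype.card V) - 1 ≤
        (G.degree x : ℝ) + (G.degree y : ℝ)) :
    ∃ 𝒯 : Finset (Finset V),
      (∀ S ∈ 𝒯, S.card = r ∧ G.IsClique (S : Set V)) ∧
      ((𝒯 : Set (Finset V)).Pairwise fun S T => Disjoint S T) ∧
      ∀ v : V, ∃ S ∈ 𝒯, v ∈ S := by
  exact KK.factor G r hr hdvd hOre
end
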